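/- Let (U,ρ) be a complete separable metric space. A measure-valued function ℝ ∋ t ↦ μ[·;t] ∈ M(U) belongs to the space W_1(ℝ, M(U)) of Weyl almost periodic measure-valued functions (with respect to the Lévy–Prokhorov metric) if and only if for every continuous bounded function 𝓕 ∈ C_b(U,ℝ) the real-valued function t ↦ ∫_U 𝓕(x) μ[dx;t] belongs to W_1(ℝ,ℝ). -/

import Mathlib

open MeasureTheory Filter Topology TopologicalSpace
open scoped ENNReal Pointwise

noncomputable section

/-- The truncated ("bounded") distance `ρ'(x,y) = min {1, ρ(x,y)}` on a metric space. -/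
def bdist {α : Type*} [PseudoMetricSpace α] : α → α → ℝ := fun x y => min 1 (dist x y)

/-- The Hausdorff distance `dist_{ρ'}` (corresponding to the truncated metric `ρ'`)
between non-empty closed subsets of a metric space. -/
def clDist {α : Type*} [MetricSpace α] : Closeds α → Closeds α → ℝ :=
  fun A B => (min 1 (EMetric.hausdorffEdist (A : Set α) (B : Set α))).toReal

/-- The Hausdorff distance `dist_ρ` between (non-empty closed bounded) subsets. -/
def clbDist {α : Type*} [MetricSpace α] : Closeds α → Closeds α → ℝ :=
  fun A B => Metric.hausdorffDist (A : Set α) (B : Set α)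

/-- `D^{(d)}_{p,l}(f,g) = ( sup_ξ (1/l) ∫_ξ^{ξ+l} d(f t, g t)^p dt )^{1/p}`,
valued in `ℝ≥0∞`. -/
def weylD {α : Type*} (d : α → α → ℝ) (p l : ℝ) (f g : ℝ → α) : ℝ≥0∞ :=
  (⨆ ξ : ℝ, ENNReal.ofReal (1 / l) *
      ∫⁻ t in Set.Icc ξ (ξ + l), ENNReal.ofReal (d (f t) (g t) ^ p)) ^ (1 / p)

/-- The Weyl semimetric `D^{(d)}_p(f,g) = lim_{l → +∞} D^{(d)}_{p,l}(f,g)`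
(the limit exists; it is formalized here as a `limsup`). -/
def weylDinf {α : Type*} (d : α → α → ℝ) (p : ℝ) (f g : ℝ → α) : ℝ≥0∞ :=
  Filter.limsup (fun l => weylD d p l f g) Filter.atTop

/-- Membership in `M_p(ℝ, α)`: `f` is (strongly) measurable and
`sup_ξ ∫_ξ^{ξ+1} d(f t, x₀)^p dt < +∞`. -/
def MemMp {α : Type*} [TopologicalSpace α] (d : α → α → ℝ) (p : ℝ) (x₀ : α)
    (f : ℝ → α) : Prop :=
  AEStronglyMeasurable f MeasureTheory.volume ∧
  ∃ C : ℝ, ∀ ξ : ℝ,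
    (∫⁻ t in Set.Icc ξ (ξ + 1), ENNReal.ofReal (d (f t) x₀ ^ p)) ≤ ENNReal.ofReal C

/-- A set `T ⊆ ℝ` is relatively dense. -/
def RelDense (T : Set ℝ) : Prop := ∃ a > 0, ∀ ξ : ℝ, (Set.Icc ξ (ξ + a) ∩ T).Nonempty

/-- The set of `(ε, D^{(d)}_{p,l})`-almost periods of `f`. -/
def APeriodsL {α : Type*} (d : α → α → ℝ) (p l ε : ℝ) (f : ℝ → α) : Set ℝ :=
  {τ | weylD d p l f (fun t => f (t + τ)) < ENNReal.ofReal ε}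

/-- The set `P^{(d)}_p(ε; f)` of `(ε, D^{(d)}_p)`-almost periods of `f`. -/
def APeriods {α : Type*} (d : α → α → ℝ) (p ε : ℝ) (f : ℝ → α) : Set ℝ :=
  {τ | weylDinf d p f (fun t => f (t + τ)) < ENNReal.ofReal ε}

/-- Membership in the space `W_p(ℝ, α)` of Weyl almost periodic functions of order `p`
w.r.t. the distance `d` (with distinguished point `x₀`). -/
def MemWp {α : Type*} [TopologicalSpace α] (d : α → α → ℝ) (p : ℝ) (x₀ : α)
    (f : ℝ → α) : Prop :=
  MemMp d p x₀ f ∧ ∀ ε > 0, ∃ l > 0, RelDense (APeriodsL d p l ε f)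

/-- The module `Mod f`: the additive group of all `λ ∈ ℝ` such that `e^{iλτ_j} → 1`
for every `f`-returning sequence `{τ_j}` (a sequence with `D^{(d)}_1(f, f(·+τ_j)) → 0`,
where `d` is the relevant bounded distance). -/
def WMod {α : Type*} (d : α → α → ℝ) (f : ℝ → α) : Set ℝ :=
  {lam : ℝ | ∀ τ : ℕ → ℝ,
    Tendsto (fun j => weylDinf d 1 f (fun t => f (t + τ j))) atTop (nhds 0) →
    Tendsto (fun j => Complex.exp (Complex.I * ((lam * τ j : ℝ) : ℂ))) atTop (nhds 1)}

/-- `κ_W(T) = lim_{l → +∞} sup_ξ (1/l) meas([ξ, ξ+l] ∩ T)` (formalized as a `limsup`). -/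
def kappaW (T : Set ℝ) : ℝ≥0∞ :=
  Filter.limsup (fun l : ℝ => ⨆ ξ : ℝ,
    ENNReal.ofReal (1 / l) * MeasureTheory.volume (Set.Icc ξ (ξ + l) ∩ T)) Filter.atTop

/-- Membership in `M*_p(ℝ, α)`. -/
def MemMpStar {α : Type*} [TopologicalSpace α] (d : α → α → ℝ) (p : ℝ) (x₀ : α)
    (f : ℝ → α) : Prop :=
  MemMp d p x₀ f ∧
  ∀ ε > 0, ∃ δ > 0, ∀ T : Set ℝ, MeasurableSet T → kappaW T < ENNReal.ofReal δ →
    Filter.limsup (fun l : ℝ => ⨆ ξ : ℝ, ENNReal.ofReal (1 / l) *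
        ∫⁻ t in Set.Icc ξ (ξ + l) ∩ T, ENNReal.ofReal (d (f t) x₀ ^ p)) Filter.atTop
      < ENNReal.ofReal ε

/-- Distance from a point to a set w.r.t. the distance `d`, valued in `ℝ≥0∞`
(`∞` for the empty set). -/
def dInfDist {α : Type*} (d : α → α → ℝ) (x : α) (K : Set α) : ℝ≥0∞ :=
  ⨅ y ∈ K, ENNReal.ofReal (d x y)

/-- Membership in `W̃_p(ℝ, α)`: conditions 1) (relatively dense sets of
`(ε, D^{(d)}_p)`-almost periods) and 2) (approximate compactness of values). -/
def MemWpTilde {α : Type*} [TopologicalSpace α] (d : α → α → ℝ) (p : ℝ) (x₀ : α)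
    (f : ℝ → α) : Prop :=
  MemMp d p x₀ f ∧
  (∀ ε > 0, RelDense (APeriods d p ε f)) ∧
  (∀ ε > 0, ∀ δ > 0, ∃ K : Set α, IsCompact K ∧
      kappaW {t | ENNReal.ofReal ε ≤ dInfDist d (f t) K} < ENNReal.ofReal δ)

/-- The support of a Borel measure on a topological space. -/
def measSupport {α : Type*} [TopologicalSpace α] [MeasurableSpace α]
    (μ : Measure α) : Set α :=
  {x | ∀ V : Set α, IsOpen V → x ∈ V → 0 < μ V}

/-- `r_δ(x, μ) = inf { r > 0 : μ[U_r(x)] > δ }`. -/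
def rdelta {α : Type*} [PseudoMetricSpace α] [MeasurableSpace α]
    (x : α) (μ : Measure α) (δ : ℝ) : ℝ :=
  sInf {r : ℝ | 0 < r ∧ ENNReal.ofReal δ < μ (Metric.ball x r)}

/-- The Lévy–Prokhorov distance on Borel probability measures. -/
def lpDist {α : Type*} [MeasurableSpace α] [PseudoEMetricSpace α] :
    ProbabilityMeasure α → ProbabilityMeasure α → ℝ :=
  fun μ ν => MeasureTheory.levyProkhorovDist (μ : Measure α) (ν : Measure α)

end

namespace WeylAP

/-- Uniform bound on averages over windows of length `l`. -/
def Avg (h : ℝ → ℝ) (l c : ℝ) : Prop :=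
  ∀ ξ : ℝ, ∫⁻ t in Set.Icc ξ (ξ + l), ENNReal.ofReal (h t) ≤ ENNReal.ofReal (c * l)

theorem avg_of_weylD {α : Type*} {d : α → α → ℝ} {l ε : ℝ} {f g : ℝ → α} (hl : 0 < l)
    (h : weylD d 1 l f g < ENNReal.ofReal ε) : Avg (fun t => d (f t) (g t)) l ε := by
  intro ξ
  unfold weylD at h
  simp only [Real.rpow_one, div_one, ENNReal.rpow_one] at h
  have h1 := (le_iSup (fun ξ : ℝ => ENNReal.ofReal (1 / l) *
      ∫⁻ t in Set.Icc ξ (ξ + l), ENNReal.ofReal (d (f t) (g t))) ξ).trans h.le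
  have h2 : ENNReal.ofReal l * (ENNReal.ofReal (1 / l) *
      ∫⁻ t in Set.Icc ξ (ξ + l), ENNReal.ofReal (d (f t) (g t))) ≤
      ENNReal.ofReal l * ENNReal.ofReal ε := mul_le_mul_right h1 _
  rw [← mul_assoc, ← ENNReal.ofReal_mul hl.le, ← ENNReal.ofReal_mul hl.le,
    mul_one_div_cancel hl.ne', ENNReal.ofReal_one, one_mul, mul_comm l ε] at h2
  exact h2

theorem weylD_lt {α : Type*} {d : α → α → ℝ} {l c ε : ℝ} {f g : ℝ → α} (hl : 0 < l)
    (hε : 0 < ε) (hc : c < ε)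
    (h : Avg (fun t => d (f t) (g t)) l c) : weylD d 1 l f g < ENNReal.ofReal ε := by
  unfold weylD
  simp only [Real.rpow_one, div_one, ENNReal.rpow_one]
  refine lt_of_le_of_lt (iSup_le fun ξ => ?_) ((ENNReal.ofReal_lt_ofReal_iff hε).2 hc)
  calc _ ≤ ENNReal.ofReal (1 / l) * ENNReal.ofReal (c * l) := mul_le_mul_right (h ξ) _
    _ = ENNReal.ofReal c := by
      rw [← ENNReal.ofReal_mul (by positivity)]
      congr 1
      field_simp

theorem Avg.mono {h h' : ℝ → ℝ} {l c : ℝ} (H : Avg h' l c) (hh : ∀ t, h t ≤ h' t) : Avg h l c :=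
  fun ξ => (lintegral_mono fun t => ENNReal.ofReal_le_ofReal (hh t)).trans (H ξ)

theorem Avg.mono_c {h : ℝ → ℝ} {l c c' : ℝ} (hl : 0 < l) (H : Avg h l c) (hh : c ≤ c') :
    Avg h l c' :=
  fun ξ => (H ξ).trans (ENNReal.ofReal_le_ofReal (by gcongr))

theorem Avg.add {h h' : ℝ → ℝ} {l c c' : ℝ} (hl : 0 < l) (hc : 0 ≤ c) (hc' : 0 ≤ c')
    (hm : AEMeasurable h volume) (H : Avg h l c) (H' : Avg h' l c') :
    Avg (fun t => h t + h' t) l (c + c') := by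
  intro ξ
  calc _ ≤ ∫⁻ t in Set.Icc ξ (ξ + l), (ENNReal.ofReal (h t) + ENNReal.ofReal (h' t)) :=
        lintegral_mono fun t => ENNReal.ofReal_add_le
    _ = (∫⁻ t in Set.Icc ξ (ξ + l), ENNReal.ofReal (h t)) +
        ∫⁻ t in Set.Icc ξ (ξ + l), ENNReal.ofReal (h' t) :=
        lintegral_add_left' hm.ennreal_ofReal.restrict _
    _ ≤ ENNReal.ofReal (c * l) + ENNReal.ofReal (c' * l) := add_le_add (H ξ) (H' ξ)
    _ = _ := by rw [← ENNReal.ofReal_add (by positivity) (by positivity), add_mul]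

theorem Avg.const_mul {h : ℝ → ℝ} {l c k : ℝ} (hk : 0 ≤ k) (H : Avg h l c) :
    Avg (fun t => k * h t) l (k * c) := by
  intro ξ
  simp_rw [ENNReal.ofReal_mul hk]
  rw [lintegral_const_mul' _ _ ENNReal.ofReal_ne_top, mul_assoc, ENNReal.ofReal_mul hk]
  exact mul_le_mul_right (H ξ) _

theorem Avg.const {l c : ℝ} (hc : 0 ≤ c) : Avg (fun _ => c) l c := by
  intro ξ
  rw [lintegral_const]
  simp [ENNReal.ofReal_mul hc]

theorem Avg.sum {m : ℕ} {h : ℕ → ℝ → ℝ} {l : ℝ} {c : ℕ → ℝ} (hl : 0 < l)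
    (hc : ∀ j < m, 0 ≤ c j) (hm : ∀ j < m, AEMeasurable (h j) volume)
    (H : ∀ j < m, Avg (h j) l (c j)) :
    Avg (fun t => ∑ j ∈ Finset.range m, h j t) l (∑ j ∈ Finset.range m, c j) := by
  induction m with
  | zero => simpa using Avg.const (l := l) (le_refl (0 : ℝ))
  | succ m ih =>
    simp_rw [Finset.sum_range_succ]
    refine Avg.add hl (Finset.sum_nonneg fun j hj => hc j ?_) (hc m (by omega)) ?_
      (ih (fun j hj => hc j (by omega)) (fun j hj => hm j (by omega))
        (fun j hj => H j (by omega))) (H m (by omega))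
    · have := Finset.mem_range.1 hj; omega
    · refine Finset.aemeasurable_fun_sum _ fun j hj => hm j ?_
      have := Finset.mem_range.1 hj; omega

theorem lintegral_shift (h : ℝ → ℝ≥0∞) (a b τ : ℝ) :
    ∫⁻ t in Set.Icc a b, h (t + τ) = ∫⁻ t in Set.Icc (a + τ) (b + τ), h t := by
  have := (measurePreserving_add_right (volume : Measure ℝ) τ).setLIntegral_comp_preimage_emb
    (MeasurableEquiv.addRight τ).measurableEmbedding h (Set.Icc (a + τ) (b + τ))
  rw [← this]
  congr 2
  ext x; simp

theorem Avg.shift {h : ℝ → ℝ} {l c : ℝ} (H : Avg h l c) (τ : ℝ) :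
    Avg (fun t => h (t + τ)) l c := by
  intro ξ
  rw [lintegral_shift (fun t => ENNReal.ofReal (h t))]
  have := H (ξ + τ)
  rwa [show ξ + τ + l = ξ + l + τ by ring] at this

theorem Avg.nat_mul {h : ℝ → ℝ} {l c : ℝ} (hl : 0 < l) (hc : 0 ≤ c) (H : Avg h l c) (n : ℕ)
    (ξ : ℝ) : ∫⁻ t in Set.Icc ξ (ξ + n * l), ENNReal.ofReal (h t) ≤
      ENNReal.ofReal (c * (n * l)) := by
  induction n with
  | zero => simp
  | succ n ih =>
    have hs : Set.Icc ξ (ξ + (n + 1 : ℕ) * l) ⊆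
        Set.Icc ξ (ξ + n * l) ∪ Set.Icc (ξ + n * l) (ξ + n * l + l) := by
      intro x hx
      push_cast at hx
      rcases le_total x (ξ + n * l) with h1 | h1
      · exact Or.inl ⟨hx.1, h1⟩
      · exact Or.inr ⟨h1, by linarith [hx.2]⟩
    calc _ ≤ _ := lintegral_mono_set hs
      _ ≤ _ := lintegral_union_le _ _ _
      _ ≤ _ := add_le_add ih (H _)
      _ = _ := by
        rw [← ENNReal.ofReal_add (by positivity) (by positivity)]
        congr 1; push_cast; ring

theorem Avg.scale {h : ℝ → ℝ} {l c L : ℝ} (hl : 0 < l) (hc : 0 ≤ c) (H : Avg h l c)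
    (hL : l ≤ L) : Avg h L (2 * c) := by
  intro ξ
  obtain ⟨n, hn⟩ : ∃ n : ℕ, n = ⌈L / l⌉₊ := ⟨_, rfl⟩
  have h1 : L ≤ n * l := by
    rw [← div_le_iff₀ hl, hn]; exact Nat.le_ceil _
  have h2 : n * l ≤ 2 * L := by
    have : (n : ℝ) < L / l + 1 := by
      rw [hn]; exact Nat.ceil_lt_add_one (by have := hl.trans_le hL; positivity)
    have := mul_lt_mul_of_pos_right this hl
    rw [add_mul, div_mul_cancel₀ _ hl.ne'] at this
    linarith
  calc _ ≤ ∫⁻ t in Set.Icc ξ (ξ + n * l), ENNReal.ofReal (h t) :=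
        lintegral_mono_set (Set.Icc_subset_Icc le_rfl (by linarith))
    _ ≤ _ := H.nat_mul hl hc n ξ
    _ ≤ _ := ENNReal.ofReal_le_ofReal (by nlinarith)

/-- Bounded real-valued Weyl almost periodic functions, in a convenient form. -/
structure WR (h : ℝ → ℝ) : Prop where
  meas : AEStronglyMeasurable h volume
  bdd : ∃ M : ℝ, 0 < M ∧ ∀ t, |h t| ≤ M
  ap : ∀ ε > 0, ∃ l > 0, RelDense {τ | Avg (fun t => |h t - h (t + τ)|) l ε}

theorem aesm_shift {β : Type*} [TopologicalSpace β] {h : ℝ → β}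
    (hh : AEStronglyMeasurable h volume) (τ : ℝ) :
    AEStronglyMeasurable (fun t => h (t + τ)) volume :=
  hh.comp_measurePreserving (measurePreserving_add_right (volume : Measure ℝ) τ)

theorem aem_diff {h : ℝ → ℝ} (hh : AEStronglyMeasurable h volume) (σ τ : ℝ) :
    AEMeasurable (fun t => |h (t + σ) - h (t + τ)|) volume :=
  ((aesm_shift hh σ).sub (aesm_shift hh τ)).norm.aemeasurable

theorem aem_diff0 {h : ℝ → ℝ} (hh : AEStronglyMeasurable h volume) (τ : ℝ) :
    AEMeasurable (fun t => |h t - h (t + τ)|) volume :=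
  (hh.sub (aesm_shift hh τ)).norm.aemeasurable

theorem bdd_intervalIntegrable {h : ℝ → ℝ} (hh : AEStronglyMeasurable h volume) {M : ℝ}
    (hM : ∀ t, |h t| ≤ M) (a b : ℝ) : IntervalIntegrable h volume a b := by
  rw [intervalIntegrable_iff]
  exact Measure.integrableOn_of_bounded (M := M) (by simp) hh
    (Eventually.of_forall fun t => hM t)

theorem mean_close {h : ℝ → ℝ} (W : WR h) {δ : ℝ} (hδ : 0 < δ) :
    ∃ N : ℕ, 0 < N ∧ ∀ ξ : ℝ,
      |(∫ t in ξ..ξ + N, h t) - ∫ t in (0 : ℝ)..N, h t| ≤ δ * N := by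
  obtain ⟨M, hM0, hM⟩ := W.bdd
  obtain ⟨l, hl, a, ha, hA⟩ := W.ap (δ / 4) (by positivity)
  obtain ⟨N, hN⟩ := exists_nat_ge (max l (4 * a * M / δ))
  have hN1 : l ≤ N := (le_max_left _ _).trans hN
  have hN2 : 4 * a * M ≤ N * δ := (div_le_iff₀ hδ).1 ((le_max_right _ _).trans hN)
  have hNpos : (0 : ℝ) < N := hl.trans_le hN1
  refine ⟨N, by exact_mod_cast hNpos, fun ξ => ?_⟩
  obtain ⟨τ, ⟨hτ1, hτ2⟩, hτ⟩ := hA (-ξ)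
  have hτ' : Avg (fun t => |h t - h (t + τ)|) N (2 * (δ / 4)) :=
    Avg.scale hl (by positivity) hτ hN1
  have hi := bdd_intervalIntegrable W.meas hM
  have hi' : ∀ a b, IntervalIntegrable (fun t => h (t + τ)) volume a b :=
    bdd_intervalIntegrable (aesm_shift W.meas τ) (fun t => hM _)
  have e1 : |(∫ t in ξ..ξ + N, h t) - ∫ t in ξ..ξ + N, h (t + τ)| ≤ δ / 2 * N := by
    rw [← intervalIntegral.integral_sub (hi _ _) (hi' _ _)]
    refine (intervalIntegral.abs_integral_le_integral_abs (by linarith)).trans ?_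
    rw [intervalIntegral.integral_of_le (by linarith),
      integral_eq_lintegral_of_nonneg_ae (Eventually.of_forall fun t => abs_nonneg _)
        (aem_diff0 W.meas τ).aestronglyMeasurable.restrict]
    refine ENNReal.toReal_le_of_le_ofReal (by positivity) ?_
    refine (lintegral_mono_set Set.Ioc_subset_Icc_self).trans ((hτ' ξ).trans ?_)
    exact ENNReal.ofReal_le_ofReal (by linarith)
  have e2 : (∫ t in ξ..ξ + N, h (t + τ)) = ∫ t in (ξ + τ)..(ξ + τ + N), h t := by
    rw [intervalIntegral.integral_comp_add_right]; congr 1; ring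
  have e3 : (∫ t in (ξ + τ)..(ξ + τ + N), h t) - (∫ t in (0 : ℝ)..N, h t) =
      (∫ t in (N : ℝ)..(ξ + τ + N), h t) - ∫ t in (0 : ℝ)..(ξ + τ), h t := by
    have h1 := intervalIntegral.integral_add_adjacent_intervals (hi 0 (ξ + τ)) (hi (ξ + τ) (ξ + τ + N))
    have h2 := intervalIntegral.integral_add_adjacent_intervals (hi 0 N) (hi N (ξ + τ + N))
    linarith
  have e4 : ∀ x y : ℝ, x ≤ y → y ≤ x + a → |∫ t in x..y, h t| ≤ M * a := by
    intro x y hxy hy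
    have := intervalIntegral.norm_integral_le_of_norm_le_const (a := x) (b := y) (f := h) (C := M)
      (fun t _ => hM t)
    rw [Real.norm_eq_abs] at this
    refine this.trans ?_
    rw [abs_of_nonneg (by linarith)]
    gcongr; linarith
  have e5 := e4 N (ξ + τ + N) (by linarith) (by linarith)
  have e6 := e4 0 (ξ + τ) (by linarith) (by linarith)
  rw [e2] at e1
  rw [abs_le] at *
  constructor <;> nlinarith

theorem translation_cont {h : ℝ → ℝ} (hh : AEStronglyMeasurable h volume) {M : ℝ}
    (hM : ∀ t, |h t| ≤ M) {R ε : ℝ} (hR : 0 < R) (hε : 0 < ε) :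
    ∃ η > 0, ∀ s : ℝ, |s| ≤ η →
      ∫⁻ t in Set.Icc 0 R, ENNReal.ofReal |h t - h (t + s)| ≤ ENNReal.ofReal ε := by
  set f : ℝ → ℝ := Set.indicator (Set.Icc (-1) (R + 1)) h with hf
  have hfi : Integrable f volume := by
    rw [hf, integrable_indicator_iff measurableSet_Icc]
    exact Measure.integrableOn_of_bounded (M := M) (by simp) hh (Eventually.of_forall fun t => hM t)
  obtain ⟨g, hgs, hg1, hgc, hgi⟩ := hfi.exists_hasCompactSupport_lintegral_sub_le
    (ε := ENNReal.ofReal (ε / 3)) (by simpa using hε)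
  have huc : UniformContinuous g := hgs.uniformContinuous_of_continuous hgc
  obtain ⟨η, hη, hηg⟩ := Metric.uniformContinuous_iff.1 huc (ε / 3 / R) (by positivity)
  refine ⟨min (η / 2) 1, by positivity, fun s hs => ?_⟩
  have hs1 : |s| < η := by have := hs.trans (min_le_left _ _); linarith
  have hs2 : |s| ≤ 1 := hs.trans (min_le_right _ _)
  have hs3 := abs_le.1 hs2
  have hfg : AEMeasurable (fun t => ‖f t - g t‖ₑ) volume :=
    (hfi.aestronglyMeasurable.sub hgi.aestronglyMeasurable).enorm
  have key : ∀ t ∈ Set.Icc 0 R, ENNReal.ofReal |h t - h (t + s)| ≤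
      ‖f t - g t‖ₑ + (‖f (t + s) - g (t + s)‖ₑ + ENNReal.ofReal (ε / 3 / R)) := by
    intro t ht
    have m1 : t ∈ Set.Icc (-1) (R + 1) := ⟨by linarith [ht.1], by linarith [ht.2]⟩
    have m2 : t + s ∈ Set.Icc (-1) (R + 1) := ⟨by linarith [ht.1], by linarith [ht.2]⟩
    have e1 : f t = h t := Set.indicator_of_mem m1 _
    have e2 : f (t + s) = h (t + s) :=
      Set.indicator_of_mem m2 _
    have e3 : dist (g t) (g (t + s)) < ε / 3 / R := hηg (by
      rw [Real.dist_eq]; simpa using hs1)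
    rw [Real.dist_eq] at e3
    rw [e1, e2, ← ofReal_norm, ← ofReal_norm, Real.norm_eq_abs, Real.norm_eq_abs,
      ← ENNReal.ofReal_add (abs_nonneg _) (by positivity),
      ← ENNReal.ofReal_add (abs_nonneg _) (by positivity)]
    refine ENNReal.ofReal_le_ofReal ?_
    have h1 := abs_sub_le (h t) (g t) (h (t + s))
    have h2 := abs_sub_le (g t) (g (t + s)) (h (t + s))
    rw [abs_sub_comm (g (t + s))] at h2
    linarith
  calc _ ≤ ∫⁻ t in Set.Icc 0 R, (‖f t - g t‖ₑ +
        (‖f (t + s) - g (t + s)‖ₑ + ENNReal.ofReal (ε / 3 / R))) :=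
        setLIntegral_mono' measurableSet_Icc key
    _ = (∫⁻ t in Set.Icc 0 R, ‖f t - g t‖ₑ) + ((∫⁻ t in Set.Icc 0 R, ‖f (t + s) - g (t + s)‖ₑ) +
        ∫⁻ t in Set.Icc 0 R, ENNReal.ofReal (ε / 3 / R)) := by
        rw [lintegral_add_left' hfg.restrict, lintegral_add_right' _ aemeasurable_const]
    _ ≤ ENNReal.ofReal (ε / 3) + (ENNReal.ofReal (ε / 3) + ENNReal.ofReal (ε / 3)) := by
        gcongr
        · exact (setLIntegral_le_lintegral _ _).trans hg1
        · refine (setLIntegral_le_lintegral _ _).trans ?_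
          rw [lintegral_add_right_eq_self (fun t => ‖f t - g t‖ₑ) s]
          exact hg1
        · rw [lintegral_const]
          simp only [MeasurableSet.univ, Measure.restrict_apply, Set.univ_inter, Real.volume_Icc,
            sub_zero]
          rw [← ENNReal.ofReal_mul (by positivity), div_mul_cancel₀ _ hR.ne']
    _ = _ := by
        rw [← ENNReal.ofReal_add (by positivity) (by positivity),
          ← ENNReal.ofReal_add (by positivity) (by positivity)]
        congr 1; ring

theorem uniform_translation {h : ℝ → ℝ} (W : WR h) {ε : ℝ} (hε : 0 < ε) :
    ∃ L₀ > 0, ∀ L ≥ L₀, ∃ η > 0, ∀ s : ℝ, |s| ≤ η →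
      Avg (fun t => |h t - h (t + s)|) L ε := by
  obtain ⟨M, hM0, hM⟩ := W.bdd
  obtain ⟨l, hl, a, ha, hA⟩ := W.ap (ε / 6) (by positivity)
  refine ⟨l, hl, fun L hL => ?_⟩
  have hLpos : 0 < L := hl.trans_le hL
  obtain ⟨η, hη, H⟩ := translation_cont W.meas hM (R := L + a) (ε := ε / 3 * L)
    (by positivity) (by positivity)
  refine ⟨η, hη, fun s hs ξ => ?_⟩
  obtain ⟨τ, ⟨hτ1, hτ2⟩, hτ⟩ := hA (-ξ)
  have hτ' : Avg (fun t => |h t - h (t + τ)|) L (2 * (ε / 6)) :=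
    Avg.scale hl (by positivity) hτ hL
  have hτ'' := hτ'.shift s
  have key : ∀ t, ENNReal.ofReal |h t - h (t + s)| ≤ ENNReal.ofReal |h t - h (t + τ)| +
      (ENNReal.ofReal |h (t + s) - h (t + s + τ)| +
        ENNReal.ofReal |h (t + τ) - h (t + τ + s)|) := by
    intro t
    rw [← ENNReal.ofReal_add (abs_nonneg _) (abs_nonneg _),
      ← ENNReal.ofReal_add (abs_nonneg _) (by positivity)]
    refine ENNReal.ofReal_le_ofReal ?_
    have h1 := abs_sub_le (h t) (h (t + τ)) (h (t + s))
    have h2 := abs_sub_le (h (t + τ)) (h (t + τ + s)) (h (t + s))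
    rw [abs_sub_comm (h (t + τ + s)), show t + τ + s = t + s + τ by ring] at h2
    rw [show t + τ + s = t + s + τ by ring]
    linarith
  calc _ ≤ ∫⁻ t in Set.Icc ξ (ξ + L), (ENNReal.ofReal |h t - h (t + τ)| +
      (ENNReal.ofReal |h (t + s) - h (t + s + τ)| +
        ENNReal.ofReal |h (t + τ) - h (t + τ + s)|)) := lintegral_mono key
    _ = (∫⁻ t in Set.Icc ξ (ξ + L), ENNReal.ofReal |h t - h (t + τ)|) +
      ((∫⁻ t in Set.Icc ξ (ξ + L), ENNReal.ofReal |h (t + s) - h (t + s + τ)|) +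
        ∫⁻ t in Set.Icc ξ (ξ + L), ENNReal.ofReal |h (t + τ) - h (t + τ + s)|) := by
        rw [lintegral_add_left' (aem_diff0 W.meas τ).ennreal_ofReal.restrict,
          lintegral_add_left']
        have := (aem_diff W.meas s (s + τ)).ennreal_ofReal.restrict (s := Set.Icc ξ (ξ + L))
        simpa only [add_assoc] using this
    _ ≤ ENNReal.ofReal (ε / 3 * L) + (ENNReal.ofReal (ε / 3 * L) + ENNReal.ofReal (ε / 3 * L)) := by
        gcongr
        · refine (hτ' ξ).trans (ENNReal.ofReal_le_ofReal (le_of_eq (by ring)))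
        · refine (hτ'' ξ).trans (ENNReal.ofReal_le_ofReal (le_of_eq (by ring)))
        · rw [lintegral_shift (fun t => ENNReal.ofReal |h t - h (t + s)|)]
          refine (lintegral_mono_set (Set.Icc_subset_Icc ?_ ?_)).trans (H s hs) <;> linarith
    _ = _ := by
        rw [← ENNReal.ofReal_add (by positivity) (by positivity),
          ← ENNReal.ofReal_add (by positivity) (by positivity)]
        congr 1; ring

theorem coloring {h : ℝ → ℝ} (W : WR h) {ε : ℝ} (hε : 0 < ε) :
    ∃ L₀ > 0, ∀ L ≥ L₀, ∃ c : ℝ → ℤ, (Set.range c).Finite ∧ ∀ τ τ', c τ = c τ' →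
      Avg (fun t => |h (t + τ) - h (t + τ')|) L ε := by
  obtain ⟨L₁, hL₁, H₁⟩ := uniform_translation W (ε := ε / 3) (by positivity)
  obtain ⟨l, hl, a, ha, hA⟩ := W.ap (ε / 6) (by positivity)
  refine ⟨max L₁ l, by positivity, fun L hL => ?_⟩
  have hLl : l ≤ L := (le_max_right _ _).trans hL
  have hLpos : 0 < L := hl.trans_le hLl
  obtain ⟨η, hη, H⟩ := H₁ L ((le_max_left _ _).trans hL)
  choose s hs hsA using fun τ : ℝ => hA (-τ)
  refine ⟨fun τ => ⌊(τ + s τ) / η⌋, ?_, ?_⟩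
  · refine (Set.finite_Icc (0 : ℤ) ⌊a / η⌋).subset ?_
    rintro _ ⟨τ, rfl⟩
    have := hs τ
    refine ⟨Int.floor_nonneg.2 (div_nonneg (by linarith [this.1]) hη.le), Int.floor_le_floor ?_⟩
    gcongr; linarith [this.2]
  · intro τ τ' hc
    have hlt := Int.abs_sub_lt_one_of_floor_eq_floor hc
    rw [← sub_div, abs_div, abs_of_pos hη, div_lt_one hη] at hlt
    have A1 : ∀ σ, Avg (fun t => |h (t + σ) - h (t + σ + s σ)|) L (ε / 3) := fun σ =>
      Avg.mono_c hLpos (Avg.shift (Avg.scale hl (by positivity) (hsA σ) hLl) σ)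
        (le_of_eq (by ring))
    have A2 := (H ((τ' + s τ') - (τ + s τ)) (by rw [abs_sub_comm]; exact hlt.le)).shift (τ + s τ)
    have A3 := Avg.add hLpos (by positivity) (by positivity) (by
        simpa only [add_assoc] using aem_diff W.meas τ (τ + s τ)) (A1 τ)
      (Avg.add hLpos (by positivity) (by positivity) (by
        simpa only [add_assoc] using aem_diff W.meas τ' (τ' + s τ')) (A1 τ') A2)
    refine Avg.mono (Avg.mono_c hLpos A3 (le_of_eq (by ring))) fun t => ?_
    have e : t + (τ + s τ) + (τ' + s τ' - (τ + s τ)) = t + τ' + s τ' := by ring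
    simp only [e]
    rw [show t + (τ + s τ) = t + τ + s τ by ring]
    have h1 := abs_sub_le (h (t + τ)) (h (t + τ + s τ)) (h (t + τ'))
    have h2 := abs_sub_le (h (t + τ + s τ)) (h (t + τ' + s τ')) (h (t + τ'))
    rw [abs_sub_comm (h (t + τ' + s τ'))] at h2
    linarith

theorem common_ap {m : ℕ} {h : ℕ → ℝ → ℝ} (W : ∀ j, WR (h j)) {ε : ℝ} (hε : 0 < ε) :
    ∃ L₀ > 0, ∀ L ≥ L₀,
      RelDense {τ | ∀ j < m, Avg (fun t => |h j t - h j (t + τ)|) L ε} := by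
  choose L₀ hL₀ H using fun j => coloring (W j) hε
  obtain ⟨L₁, hL₁⟩ : ∃ L₁ > 0, ∀ j < m, L₀ j ≤ L₁ := by
    refine ⟨∑ j ∈ Finset.range (m + 1), L₀ j, Finset.sum_pos (fun j _ => hL₀ j) (by simp), ?_⟩
    intro j hj
    exact Finset.single_le_sum (f := L₀) (fun i _ => (hL₀ i).le)
      (Finset.mem_range.2 (by omega))
  refine ⟨L₁, hL₁.1, fun L hL => ?_⟩
  have H' : ∀ j : Fin m, ∃ c : ℝ → ℤ, (Set.range c).Finite ∧ ∀ τ τ', c τ = c τ' →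
      Avg (fun t => |h j (t + τ) - h j (t + τ')|) L ε := fun j =>
    H j L ((hL₁.2 j j.2).trans hL)
  choose c hcf hc using H'
  have hfin : (Set.range fun τ : ℝ => fun j => c j τ).Finite := by
    refine (Set.Finite.pi hcf).subset ?_
    rintro _ ⟨τ, rfl⟩ j _
    exact ⟨τ, rfl⟩
  obtain ⟨s, hs⟩ : ∃ s : (Fin m → ℤ) → ℝ, ∀ τ, (fun j => c j (s fun j => c j τ)) =
      fun j => c j τ :=
    ⟨Function.invFun (fun τ : ℝ => fun j => c j τ), fun τ =>
      Function.invFun_eq (f := fun τ : ℝ => fun j => c j τ) ⟨τ, rfl⟩⟩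
  obtain ⟨B, hB⟩ := (hfin.image fun v => |s v|).bddAbove
  have hB' : ∀ τ, |s fun j => c j τ| ≤ B := fun τ => hB ⟨_, ⟨τ, rfl⟩, rfl⟩
  have hB0 : 0 ≤ B := (abs_nonneg _).trans (hB' 0)
  refine ⟨2 * B + 1, by positivity, fun ξ => ?_⟩
  have hb := abs_le.1 (hB' (ξ + B))
  refine ⟨ξ + B - s fun j => c j (ξ + B), ⟨by linarith, by linarith⟩, fun j hj => ?_⟩
  have h1 := congrFun (hs (ξ + B)) ⟨j, hj⟩
  have h2 := (hc ⟨j, hj⟩ _ _ h1).shift (-(s fun j => c j (ξ + B)))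
  refine h2.mono fun t => ?_
  simp only
  rw [neg_add_cancel_right]
  refine le_of_eq ?_
  congr 3
  ring

open scoped BoundedContinuousFunction

/-- A countable partition of unity of mesh `ε`, with sums over all subsets. -/
structure PU {U : Type*} [MetricSpace U] (ε : ℝ) (f : ℕ → U →ᵇ ℝ)
    (F : (ℕ → Bool) → U →ᵇ ℝ) : Prop where
  nonneg : ∀ j x, 0 ≤ f j x
  small : ∀ j x y, f j x ≠ 0 → f j y ≠ 0 → dist x y < 2 * ε
  sums : ∀ x, ∃ T : Finset ℕ, (∀ j ∉ T, f j x = 0) ∧ ∑ j ∈ T, f j x = 1 ∧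
    ∀ S, F S x = ∑ j ∈ T, if S j then f j x else 0

theorem exists_pu {U : Type*} [MetricSpace U] [SeparableSpace U] (x₀ : U) {ε : ℝ} (hε : 0 < ε) :
    ∃ (f : ℕ → U →ᵇ ℝ) (F : (ℕ → Bool) → U →ᵇ ℝ), PU ε f F := by
  have : Nonempty U := ⟨x₀⟩
  have hcov : (Set.univ : Set U) ⊆ ⋃ j, Metric.ball (denseSeq U j) ε := by
    intro x _
    obtain ⟨j, hj⟩ := (denseRange_denseSeq U).exists_dist_lt x hε
    exact Set.mem_iUnion.2 ⟨j, hj⟩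
  obtain ⟨p, hp⟩ := PartitionOfUnity.exists_isSubordinate isClosed_univ
    (fun j => Metric.ball (denseSeq U j) ε) (fun j => Metric.isOpen_ball) hcov
  have hfin : ∀ x, (Function.support fun j => p j x).Finite := fun x => p.locallyFinite.point_finite x
  have hsum1 : ∀ x, ∑ j ∈ (hfin x).toFinset, p j x = 1 := by
    intro x
    rw [← p.sum_eq_one (Set.mem_univ x)]
    exact (finsum_eq_sum _ (hfin x)).symm
  have hg : ∀ (S : ℕ → Bool) x, ∑ᶠ j, (if S j then p j x else 0) =
      ∑ j ∈ (hfin x).toFinset, if S j then p j x else 0 := by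
    intro S x
    refine finsum_eq_sum_of_support_subset _ ?_
    intro j hj
    simp only [Set.Finite.coe_toFinset, Function.mem_support] at hj ⊢
    intro h0
    simp [h0] at hj
  have hcont : ∀ S : ℕ → Bool, Continuous fun x => ∑ᶠ j, (if S j then p j x else 0) := by
    intro S
    refine continuous_finsum (fun j => ?_) (p.locallyFinite.subset fun j => ?_)
    · cases S j
      · simpa using continuous_const
      · simpa using (p j).continuous
    · intro x hx
      simp only [Function.mem_support] at hx ⊢
      intro h0
      simp [h0] at hx
  have hb : ∀ (S : ℕ → Bool) x, ‖∑ᶠ j, (if S j then p j x else 0)‖ ≤ 1 := by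
    intro S x
    rw [hg, Real.norm_eq_abs, abs_of_nonneg, ← hsum1 x]
    · refine Finset.sum_le_sum fun j _ => ?_
      split_ifs
      · exact le_rfl
      · exact p.nonneg j x
    · refine Finset.sum_nonneg fun j _ => ?_
      split_ifs
      · exact p.nonneg j x
      · exact le_rfl
  refine ⟨fun j => BoundedContinuousFunction.ofNormedAddCommGroup (p j) (p j).continuous 1
      (fun x => by
        rw [Real.norm_eq_abs, abs_of_nonneg (p.nonneg j x)]; exact p.le_one j x),
    fun S => BoundedContinuousFunction.ofNormedAddCommGroup _ (hcont S) 1 (hb S), ?_, ?_, ?_⟩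
  · intro j x; exact p.nonneg j x
  · intro j x y hx hy
    have h1 : x ∈ Metric.ball (denseSeq U j) ε := hp j (subset_closure hx)
    have h2 : y ∈ Metric.ball (denseSeq U j) ε := hp j (subset_closure hy)
    rw [Metric.mem_ball] at h1 h2
    have := dist_triangle_right x y (denseSeq U j)
    linarith
  · intro x
    refine ⟨(hfin x).toFinset, ?_, hsum1 x, fun S => hg S x⟩
    intro j hj
    simpa using hj

section
variable {U : Type*} [MetricSpace U] {ε : ℝ} {f : ℕ → U →ᵇ ℝ} {F : (ℕ → Bool) → U →ᵇ ℝ}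

theorem PU.sum_le (P : PU ε f F) (A : Finset ℕ) (x : U) : ∑ j ∈ A, f j x ≤ 1 := by
  obtain ⟨T, h0, h1, -⟩ := P.sums x
  rw [← h1]
  calc ∑ j ∈ A, f j x = ∑ j ∈ A ∩ T, f j x := by
        symm
        refine Finset.sum_subset Finset.inter_subset_left fun j hj hj' => h0 j fun h => hj' ?_
        exact Finset.mem_inter.2 ⟨hj, h⟩
    _ ≤ _ := Finset.sum_le_sum_of_subset_of_nonneg Finset.inter_subset_right
        fun j _ _ => P.nonneg j x

theorem PU.eventually_one (P : PU ε f F) (x : U) :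
    ∀ᶠ m in atTop, ∑ j ∈ Finset.range m, f j x = 1 := by
  obtain ⟨T, h0, h1, -⟩ := P.sums x
  obtain ⟨m₀, hm₀⟩ := T.exists_nat_subset_range
  filter_upwards [eventually_ge_atTop m₀] with m hm
  rw [← h1]
  symm
  refine Finset.sum_subset (hm₀.trans (Finset.range_mono hm)) fun j _ hj => h0 j hj

theorem PU.F_mem (P : PU ε f F) (S : ℕ → Bool) (x : U) : 0 ≤ F S x ∧ F S x ≤ 1 := by
  obtain ⟨T, h0, h1, h2⟩ := P.sums x
  rw [h2, ← h1]
  constructor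
  · refine Finset.sum_nonneg fun j _ => ?_
    split_ifs
    · exact P.nonneg j x
    · exact le_rfl
  · refine Finset.sum_le_sum fun j _ => ?_
    split_ifs
    · exact le_rfl
    · exact P.nonneg j x

theorem PU.F_cont (P : PU ε f F) (x : U) : Continuous fun S => F S x := by
  obtain ⟨T, h0, h1, h2⟩ := P.sums x
  simp_rw [h2]
  refine continuous_finsetSum _ fun j _ => ?_
  exact (continuous_of_discreteTopology (f := fun b : Bool => if b then f j x else 0)).comp
    (continuous_apply j)

theorem PU.tail (P : PU ε f F) (S₀ : ℕ → Bool) (m : ℕ) (x : U) :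
    F (fun j => if j < m then S₀ j else true) x - F (fun j => if j < m then S₀ j else false) x =
      1 - ∑ j ∈ Finset.range m, f j x := by
  obtain ⟨T, h0, h1, h2⟩ := P.sums x
  rw [h2, h2, ← Finset.sum_sub_distrib]
  have e : ∑ j ∈ Finset.range m, f j x = ∑ j ∈ T, if j < m then f j x else 0 := by
    rw [← Finset.sum_filter]
    symm
    refine Finset.sum_subset (fun j hj => ?_) (fun j hj hj' => ?_)
    · simpa using (Finset.mem_filter.1 hj).2
    · refine h0 j fun h => hj' (Finset.mem_filter.2 ⟨h, Finset.mem_range.1 hj⟩)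
  rw [e, ← h1, ← Finset.sum_sub_distrib]
  refine Finset.sum_congr rfl fun j _ => ?_
  by_cases hj : j < m <;> simp [hj]

variable [MeasurableSpace U] [BorelSpace U]

theorem PU.integral_mem (P : PU ε f F) (S : ℕ → Bool) (μ : Measure U) [IsProbabilityMeasure μ] :
    0 ≤ ∫ x, F S x ∂μ ∧ ∫ x, F S x ∂μ ≤ 1 := by
  constructor
  · exact integral_nonneg fun x => (P.F_mem S x).1
  · calc _ ≤ ∫ x, (1 : ℝ) ∂μ := integral_mono ((F S).integrable μ) (integrable_const _)
          fun x => (P.F_mem S x).2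
      _ = 1 := by simp

theorem PU.sum_integral_le (P : PU ε f F) (A : Finset ℕ) (μ : Measure U)
    [IsProbabilityMeasure μ] : ∑ j ∈ A, ∫ x, f j x ∂μ ≤ 1 := by
  rw [← integral_finsetSum _ fun j _ => (f j).integrable μ]
  calc _ ≤ ∫ x, (1 : ℝ) ∂μ := integral_mono
        (integrable_finsetSum _ fun j _ => (f j).integrable μ) (integrable_const _)
          fun x => P.sum_le A x
      _ = 1 := by simp

theorem PU.tendsto_sum (P : PU ε f F) (μ : Measure U) [IsProbabilityMeasure μ] :
    Tendsto (fun m => 1 - ∑ j ∈ Finset.range m, ∫ x, f j x ∂μ) atTop (𝓝 0) := by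
  have : Tendsto (fun m => ∫ x, ∑ j ∈ Finset.range m, f j x ∂μ) atTop (𝓝 (∫ _, (1 : ℝ) ∂μ)) := by
    refine tendsto_integral_of_dominated_convergence (fun _ => 1) (fun m => ?_)
      (integrable_const _) (fun m => Eventually.of_forall fun x => ?_)
      (Eventually.of_forall fun x => ?_)
    · exact (integrable_finsetSum _ fun j _ => (f j).integrable μ).aestronglyMeasurable
    · rw [Real.norm_eq_abs, abs_of_nonneg (Finset.sum_nonneg fun j _ => P.nonneg j x)]
      exact P.sum_le _ x
    · exact tendsto_const_nhds.congr' ((P.eventually_one x).mono fun m hm => hm.symm)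
  simp only [integral_const, probReal_univ, smul_eq_mul, mul_one] at this
  have h2 := this.const_sub 1
  rw [sub_self] at h2
  refine h2.congr fun m => ?_
  rw [integral_finsetSum _ fun j _ => (f j).integrable μ]

theorem PU.integral_tail (P : PU ε f F) (S₀ : ℕ → Bool) (m : ℕ) (μ : Measure U)
    [IsProbabilityMeasure μ] :
    (∫ x, F (fun j => if j < m then S₀ j else true) x ∂μ) -
      (∫ x, F (fun j => if j < m then S₀ j else false) x ∂μ) =
      1 - ∑ j ∈ Finset.range m, ∫ x, f j x ∂μ := by
  rw [← integral_sub ((F _).integrable μ) ((F _).integrable μ),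
    ← integral_finsetSum _ fun j _ => (f j).integrable μ]
  calc _ = ∫ x, (1 - ∑ j ∈ Finset.range m, f j x) ∂μ := by
        refine integral_congr_ae (Eventually.of_forall fun x => ?_)
        exact P.tail S₀ m x
    _ = _ := by
      rw [integral_sub (integrable_const _)
        (integrable_finsetSum _ fun j _ => (f j).integrable μ)]
      simp

theorem PU.integral_cont (P : PU ε f F) (μ : Measure U) [IsProbabilityMeasure μ] :
    Continuous fun S => ∫ x, F S x ∂μ := by
  refine continuous_of_dominated (bound := fun _ => 1) (fun S => ?_) (fun S => ?_)
    (integrable_const _) (Eventually.of_forall fun x => P.F_cont x)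
  · exact ((F S).integrable μ).aestronglyMeasurable
  · refine Eventually.of_forall fun x => ?_
    rw [Real.norm_eq_abs, abs_of_nonneg (P.F_mem S x).1]
    exact (P.F_mem S x).2

theorem PU.lp_le (P : PU ε f F) (hε : 0 < ε) (m : ℕ) (μ ν : Measure U)
    [IsProbabilityMeasure μ] [IsProbabilityMeasure ν] :
    levyProkhorovDist μ ν ≤ 2 * ε + (∑ j ∈ Finset.range m, |∫ x, f j x ∂μ - ∫ x, f j x ∂ν| +
      (1 - ∑ j ∈ Finset.range m, ∫ x, f j x ∂μ)) := by
  classical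
  have ht := P.sum_integral_le (Finset.range m) μ
  have hs : 0 ≤ ∑ j ∈ Finset.range m, |∫ x, f j x ∂μ - ∫ x, f j x ∂ν| :=
    Finset.sum_nonneg fun j _ => abs_nonneg _
  refine levyProkhorovDist_le_of_forall_le μ ν (by linarith) fun r B hr hB => ?_
  have hr0 : 0 ≤ r := by linarith
  suffices H : μ.real B ≤ ν.real (Metric.thickening r B) + r by
    rw [measureReal_def, measureReal_def] at H
    have := ENNReal.ofReal_le_ofReal H
    rwa [ENNReal.ofReal_add ENNReal.toReal_nonneg hr0, ENNReal.ofReal_toReal (measure_ne_top _ _),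
      ENNReal.ofReal_toReal (measure_ne_top _ _)] at this
  set J := (Finset.range m).filter fun j => ∃ y ∈ B, f j y ≠ 0 with hJ
  have hJs : J ⊆ Finset.range m := Finset.filter_subset _ _
  have i1 : ∀ (A : Finset ℕ) (κ : Measure U) [IsProbabilityMeasure κ],
      Integrable (fun x => ∑ j ∈ A, f j x) κ := fun A κ _ =>
    integrable_finsetSum _ fun j _ => (f j).integrable κ
  have e1 : μ.real B ≤ ∑ j ∈ J, ∫ x, f j x ∂μ + (1 - ∑ j ∈ Finset.range m, ∫ x, f j x ∂μ) := by
    calc μ.real B = ∫ x, B.indicator (fun _ => (1 : ℝ)) x ∂μ := by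
          rw [integral_indicator hB]; simp
      _ ≤ ∫ x, (∑ j ∈ J, f j x + (1 - ∑ j ∈ Finset.range m, f j x)) ∂μ := by
          refine integral_mono ((integrable_const _).indicator hB)
            ((i1 J μ).add ((integrable_const _).sub (i1 _ μ))) fun x => ?_
          by_cases hx : x ∈ B
          · have : ∑ j ∈ J, f j x = ∑ j ∈ Finset.range m, f j x := by
              refine Finset.sum_subset hJs fun j hj hj' => ?_
              by_contra h
              exact hj' (Finset.mem_filter.2 ⟨hj, x, hx, h⟩)
            simp only [Set.indicator_of_mem hx, this]
            linarith
          · simp only [Set.indicator_of_notMem hx]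
            have h1 := P.sum_le (Finset.range m) x
            have h2 : 0 ≤ ∑ j ∈ J, f j x := Finset.sum_nonneg fun j _ => P.nonneg j x
            linarith
      _ = _ := by
          have i2 : Integrable (fun x => 1 - ∑ j ∈ Finset.range m, f j x) μ :=
            (integrable_const _).sub (i1 _ μ)
          rw [integral_add (i1 J μ) i2,
            integral_sub (integrable_const _) (i1 _ μ),
            integral_finsetSum _ fun j _ => (f j).integrable μ,
            integral_finsetSum _ fun j _ => (f j).integrable μ]
          simp
  have e2 : ∑ j ∈ J, ∫ x, f j x ∂ν ≤ ν.real (Metric.thickening r B) := by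
    have hm : MeasurableSet (Metric.thickening r B) := Metric.isOpen_thickening.measurableSet
    rw [← integral_finsetSum _ fun j _ => (f j).integrable ν]
    calc _ ≤ ∫ x, (Metric.thickening r B).indicator (fun _ => (1 : ℝ)) x ∂ν := by
          refine integral_mono (i1 J ν) ((integrable_const _).indicator hm) fun x => ?_
          by_cases hx : x ∈ Metric.thickening r B
          · simp only [Set.indicator_of_mem hx]
            exact P.sum_le J x
          · simp only [Set.indicator_of_notMem hx]
            refine le_of_eq (Finset.sum_eq_zero fun j hj => ?_)
            by_contra h
            obtain ⟨-, y, hy, hyj⟩ := Finset.mem_filter.1 hj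
            refine hx (Metric.mem_thickening_iff.2 ⟨y, hy, ?_⟩)
            have := P.small j x y h hyj
            linarith
      _ = _ := by rw [integral_indicator hm]; simp
  have e3 : ∑ j ∈ J, ∫ x, f j x ∂μ ≤ ∑ j ∈ J, ∫ x, f j x ∂ν +
      ∑ j ∈ Finset.range m, |∫ x, f j x ∂μ - ∫ x, f j x ∂ν| := by
    calc _ ≤ ∑ j ∈ J, (∫ x, f j x ∂ν + |∫ x, f j x ∂μ - ∫ x, f j x ∂ν|) :=
          Finset.sum_le_sum fun j _ => by
            have := le_abs_self (∫ x, f j x ∂μ - ∫ x, f j x ∂ν); linarith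
      _ ≤ _ := by
        rw [Finset.sum_add_distrib]
        gcongr
  linarith

end

section
variable {U : Type*} [MetricSpace U] [MeasurableSpace U] [BorelSpace U]

theorem PU.tail_avg {ε : ℝ} {f : ℕ → U →ᵇ ℝ} {F : (ℕ → Bool) → U →ᵇ ℝ} (P : PU ε f F)
    (μ : ℝ → ProbabilityMeasure U)
    (W : ∀ G : U →ᵇ ℝ, WR fun t => ∫ x, G x ∂(μ t : Measure U)) {δ : ℝ} (hδ : 0 < δ) :
    ∃ m : ℕ, ∃ l > 0,
      Avg (fun t => 1 - ∑ j ∈ Finset.range m, ∫ x, f j x ∂(μ t : Measure U)) l δ := by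
  set h : (ℕ → Bool) → ℝ → ℝ := fun S t => ∫ x, F S x ∂(μ t : Measure U) with hh
  have hb : ∀ S t, |h S t| ≤ 1 := by
    intro S t
    have := P.integral_mem S (μ t : Measure U)
    rw [abs_of_nonneg this.1]; exact this.2
  have hcont : ∀ a b : ℝ, Continuous fun S => ∫ t in a..b, h S t := by
    intro a b
    refine intervalIntegral.continuous_of_dominated_interval (bound := fun _ => 1)
      (fun S => (W (F S)).meas.restrict) (fun S => ?_) (by simp)
      (Eventually.of_forall fun t _ => P.integral_cont (μ t : Measure U))
    exact Eventually.of_forall fun t _ => hb S t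
  set E : ℕ → Set (ℕ → Bool) := fun N => {S | ∀ ξ : ℝ,
    |(∫ t in ξ..ξ + (N + 1 : ℕ), h S t) - ∫ t in (0 : ℝ)..(N + 1 : ℕ), h S t| ≤
      δ / 3 * (N + 1 : ℕ)} with hE
  have hEc : ∀ N, IsClosed (E N) := by
    intro N
    simp only [hE, Set.setOf_forall]
    refine isClosed_iInter fun ξ => ?_
    exact isClosed_le (((hcont _ _).sub (hcont _ _)).abs) continuous_const
  have hEu : ⋃ N, E N = Set.univ := by
    refine Set.eq_univ_of_forall fun S => ?_
    obtain ⟨N, hN, H⟩ := mean_close (W (F S)) (δ := δ / 3) (by positivity)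
    obtain ⟨N, rfl⟩ : ∃ k, N = k + 1 := ⟨N - 1, by omega⟩
    exact Set.mem_iUnion.2 ⟨N, H⟩
  obtain ⟨N, S₀, hS₀⟩ := nonempty_interior_of_iUnion_of_closed hEc hEu
  obtain ⟨I, u, hu, hsub⟩ := isOpen_pi_iff.1 isOpen_interior S₀ hS₀
  obtain ⟨m₀, hm₀⟩ := I.exists_nat_subset_range
  have hNpos : (0 : ℝ) < (N + 1 : ℕ) := by positivity
  have hmem : ∀ m ≥ m₀, ∀ b : Bool, (fun j => if j < m then S₀ j else b) ∈ E N := by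
    intro m hm b
    refine interior_subset (hsub fun j hj => ?_)
    have : j < m := (Finset.mem_range.1 (hm₀ hj)).trans_le hm
    simp only [this, if_true]
    exact (hu j hj).2
  set k : ℕ → ℝ → ℝ := fun m t => 1 - ∑ j ∈ Finset.range m, ∫ x, f j x ∂(μ t : Measure U) with hk
  have hkeq : ∀ m t, k m t = h (fun j => if j < m then S₀ j else true) t -
      h (fun j => if j < m then S₀ j else false) t := fun m t =>
    (P.integral_tail S₀ m (μ t : Measure U)).symm
  have hk0 : ∀ m t, 0 ≤ k m t := fun m t => by
    have := P.sum_integral_le (Finset.range m) (μ t : Measure U)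
    simp only [hk]; linarith
  have hk1 : ∀ m t, |k m t| ≤ 1 := fun m t => by
    rw [abs_of_nonneg (hk0 m t)]
    have : 0 ≤ ∑ j ∈ Finset.range m, ∫ x, f j x ∂(μ t : Measure U) :=
      Finset.sum_nonneg fun j _ => integral_nonneg fun x => P.nonneg j x
    simp only [hk]; linarith
  have hkm : ∀ m, AEStronglyMeasurable (k m) volume := fun m => by
    have : k m = fun t => h (fun j => if j < m then S₀ j else true) t -
      h (fun j => if j < m then S₀ j else false) t := funext (hkeq m)
    rw [this]
    exact (W (F _)).meas.sub (W (F _)).meas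
  have hki : ∀ m a b, IntervalIntegrable (k m) volume a b := fun m =>
    bdd_intervalIntegrable (hkm m) (hk1 m)
  have hlim : Tendsto (fun m => ∫ t in (0 : ℝ)..(N + 1 : ℕ), k m t) atTop (𝓝 0) := by
    have := intervalIntegral.tendsto_integral_filter_of_dominated_convergence
      (μ := volume) (a := (0 : ℝ)) (b := ((N + 1 : ℕ) : ℝ)) (l := atTop) (F := k)
      (f := fun _ => (0 : ℝ)) (fun _ => 1)
      (Eventually.of_forall fun m => (hkm m).restrict)
      (Eventually.of_forall fun m => Eventually.of_forall fun t _ => hk1 m t)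
      (by simp) (Eventually.of_forall fun t _ => P.tendsto_sum (μ t : Measure U))
    simpa using this
  have hev := (hlim.eventually (gt_mem_nhds (show (0 : ℝ) < δ / 3 * (N + 1 : ℕ) by positivity))).and
    (eventually_ge_atTop m₀)
  obtain ⟨m, hm, hmm⟩ := hev.exists
  refine ⟨m, (N + 1 : ℕ), hNpos, fun ξ => ?_⟩
  have hsplit : ∀ a b : ℝ, ∫ t in a..b, k m t =
      (∫ t in a..b, h (fun j => if j < m then S₀ j else true) t) -
      ∫ t in a..b, h (fun j => if j < m then S₀ j else false) t := by
    intro a b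
    rw [← intervalIntegral.integral_sub (bdd_intervalIntegrable (W (F _)).meas (hb _) _ _)
      (bdd_intervalIntegrable (W (F _)).meas (hb _) _ _)]
    exact intervalIntegral.integral_congr fun t _ => hkeq m t
  have hfin : ∫ t in ξ..ξ + (N + 1 : ℕ), k m t ≤ δ * (N + 1 : ℕ) := by
    have h1 := abs_le.1 (hmem m hmm true ξ)
    have h2 := abs_le.1 (hmem m hmm false ξ)
    rw [hsplit] at hm ⊢
    linarith [h1.2, h2.1]
  rw [intervalIntegral.integral_of_le (by linarith)] at hfin
  have hInt0 : IntegrableOn (k m) (Set.Ioc ξ (ξ + (N + 1 : ℕ))) volume :=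
    (intervalIntegrable_iff_integrableOn_Ioc_of_le (by linarith)).1 (hki m _ _)
  rw [setLIntegral_congr (Ioc_ae_eq_Icc (μ := volume)).symm,
    ← ofReal_integral_eq_lintegral_ofReal hInt0 (Eventually.of_forall fun t => hk0 m t)]
  exact ENNReal.ofReal_le_ofReal hfin

theorem lpDist_le_one (μ ν : ProbabilityMeasure U) : lpDist μ ν ≤ 1 := by
  unfold lpDist levyProkhorovDist
  refine ENNReal.toReal_le_of_le_ofReal zero_le_one ?_
  refine (levyProkhorovEDist_le_max_measure_univ _ _).trans ?_
  simp

theorem measurable_of_integrals [SeparableSpace U] (x₀ : U) (μ : ℝ → ProbabilityMeasure U)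
    (H : ∀ G : U →ᵇ ℝ, AEStronglyMeasurable (fun t => ∫ x, G x ∂(μ t : Measure U)) volume) :
    AEStronglyMeasurable μ volume := by
  choose f F P using fun n : ℕ => exists_pu x₀ (Nat.one_div_pos_of_nat (α := ℝ) (n := n))
  set g : ProbabilityMeasure U → (ℕ × ℕ → ℝ) :=
    fun ν p => ∫ x, f p.1 p.2 x ∂(ν : Measure U) with hg
  have hgc : Continuous g := continuous_pi fun p =>
    ProbabilityMeasure.continuous_integral_boundedContinuousFunction _
  have hind : IsInducing g := by
    rw [isInducing_iff_nhds]
    intro ν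
    refine le_antisymm hgc.continuousAt.tendsto.le_comap ?_
    have key : Tendsto (fun κ : ProbabilityMeasure U => LevyProkhorov.probabilityMeasureHomeomorph κ)
        (comap g (𝓝 (g ν))) (𝓝 (LevyProkhorov.probabilityMeasureHomeomorph ν)) := by
      rw [Metric.tendsto_nhds]
      intro δ hδ
      obtain ⟨n, hn⟩ := exists_nat_one_div_lt (show (0 : ℝ) < δ / 6 by positivity)
      obtain ⟨m, hm⟩ := (((P n).tendsto_sum (ν : Measure U)).eventually
        (gt_mem_nhds (show (0 : ℝ) < δ / 3 by positivity))).exists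
      have hs : Tendsto (fun κ : ProbabilityMeasure U =>
          ∑ j ∈ Finset.range m, |g ν (n, j) - g κ (n, j)|) (comap g (𝓝 (g ν))) (𝓝 0) := by
        have h1 : Tendsto (fun v : ℕ × ℕ → ℝ => ∑ j ∈ Finset.range m, |g ν (n, j) - v (n, j)|)
            (𝓝 (g ν)) (𝓝 (∑ j ∈ Finset.range m, |g ν (n, j) - g ν (n, j)|)) := by
          refine Continuous.tendsto ?_ _
          fun_prop
        simp only [sub_self, abs_zero, Finset.sum_const_zero] at h1
        exact h1.comp tendsto_comap
      filter_upwards [hs.eventually (gt_mem_nhds (show (0 : ℝ) < δ / 3 by positivity))] with κ hκ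
      have := (P n).lp_le Nat.one_div_pos_of_nat m (ν : Measure U) (κ : Measure U)
      rw [dist_comm]
      change levyProkhorovDist (ν : Measure U) (κ : Measure U) < δ
      simp only [hg] at hκ
      linarith
    have h2 := (LevyProkhorov.probabilityMeasureHomeomorph (Ω := U)).symm.continuous.continuousAt.tendsto.comp key
    simpa [Function.comp_def, Tendsto] using h2
  have hemb : IsEmbedding g := hind.isEmbedding
  rw [← hemb.aestronglyMeasurable_comp_iff]
  refine AEMeasurable.aestronglyMeasurable ?_
  exact aemeasurable_pi_lambda _ fun p => (H (f p.1 p.2)).aemeasurable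

theorem WR.of_memWp (μ : ℝ → ProbabilityMeasure U) (G : U →ᵇ ℝ)
    (H : MemWp dist 1 (0 : ℝ) (fun t => ∫ x, G x ∂(μ t : Measure U))) :
    WR fun t => ∫ x, G x ∂(μ t : Measure U) := by
  refine ⟨H.1.1, ⟨‖G‖ + 1, by positivity, fun t => ?_⟩, fun ε hε => ?_⟩
  · have := G.norm_integral_le_norm (μ t : Measure U)
    rw [Real.norm_eq_abs] at this
    linarith
  · obtain ⟨l, hl, a, ha, hA⟩ := H.2 ε hε
    refine ⟨l, hl, a, ha, fun ξ => ?_⟩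
    obtain ⟨τ, hτ, hτ'⟩ := hA ξ
    exact ⟨τ, hτ, avg_of_weylD hl hτ'⟩

theorem backward [SeparableSpace U] (x₀ : U) (μ : ℝ → ProbabilityMeasure U)
    (κ : ProbabilityMeasure U)
    (H : ∀ G : U →ᵇ ℝ, MemWp dist 1 (0 : ℝ) (fun t => ∫ x, G x ∂(μ t : Measure U))) :
    MemWp lpDist 1 κ μ := by
  have W : ∀ G : U →ᵇ ℝ, WR fun t => ∫ x, G x ∂(μ t : Measure U) := fun G =>
    WR.of_memWp μ G (H G)
  refine ⟨⟨measurable_of_integrals x₀ μ fun G => (W G).meas, 1, fun ξ => ?_⟩, fun ε hε => ?_⟩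
  · calc _ ≤ ∫⁻ t in Set.Icc ξ (ξ + 1), 1 := by
          refine lintegral_mono fun t => ?_
          simp only [Real.rpow_one]
          exact ENNReal.ofReal_le_one.2 (lpDist_le_one _ _)
      _ ≤ _ := by simp
  · obtain ⟨f, F, P⟩ := exists_pu x₀ (show 0 < ε / 16 by positivity)
    obtain ⟨m, l, hl, hT⟩ := P.tail_avg μ W (show 0 < ε / 16 by positivity)
    obtain ⟨L₀, hL₀, hC⟩ := common_ap (m := m) (fun j => W (f j))
      (show 0 < ε / (8 * (m + 1)) by positivity)
    obtain ⟨a, ha, hA⟩ := hC (max L₀ l) (le_max_left _ _)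
    have hLpos : 0 < max L₀ l := by positivity
    refine ⟨max L₀ l, hLpos, a, ha, fun ξ => ?_⟩
    obtain ⟨τ, hτ, hτ'⟩ := hA ξ
    refine ⟨τ, hτ, weylD_lt hLpos hε (c := ε / 8 + (ε / 8 + ε / 8)) (by linarith) ?_⟩
    have hmj : ∀ j < m, AEMeasurable (fun t => |∫ x, f j x ∂(μ t : Measure U) -
        ∫ x, f j x ∂(μ (t + τ) : Measure U)|) volume := fun j _ => aem_diff0 (W (f j)).meas τ
    have hmeas : AEMeasurable (fun t => ∑ j ∈ Finset.range m, |∫ x, f j x ∂(μ t : Measure U) -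
        ∫ x, f j x ∂(μ (t + τ) : Measure U)|) volume :=
      Finset.aemeasurable_fun_sum _ fun j hj => hmj j (Finset.mem_range.1 hj)
    have hsum := Avg.sum hLpos (fun j _ => by positivity) hmj hτ'
    have hsum' : ∑ j ∈ Finset.range m, ε / (8 * (m + 1)) ≤ ε / 8 := by
      rw [Finset.sum_const, Finset.card_range, nsmul_eq_mul]
      rw [mul_div_assoc', div_le_div_iff₀ (by positivity) (by positivity)]
      nlinarith [Nat.cast_nonneg (α := ℝ) m]
    have hT' := (hT.scale hl (by positivity) (le_max_right L₀ l)).mono_c hLpos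
      (c' := ε / 8) (by linarith)
    refine Avg.mono (Avg.add hLpos (by positivity) (by positivity) aemeasurable_const
      (Avg.const (c := ε / 8) (by positivity))
      (Avg.add hLpos (by positivity) (by positivity) hmeas (hsum.mono_c hLpos hsum') hT')) ?_
    intro t
    have := P.lp_le (by positivity) m (μ t : Measure U) (μ (t + τ) : Measure U)
    rw [show 2 * (ε / 16) = ε / 8 by ring] at this
    exact this

end

section
variable {U : Type*} [MetricSpace U] [MeasurableSpace U] [BorelSpace U]

theorem lp_lip_nonneg (f : U →ᵇ ℝ) (hf : ∀ x, 0 ≤ f x) {K B : ℝ} (hK : 0 ≤ K) (hB : ‖f‖ ≤ B)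
    (hL : ∀ x y, f x ≤ f y + K * dist x y) (μ ν : ProbabilityMeasure U) :
    ∫ x, f x ∂(μ : Measure U) ≤ ∫ x, f x ∂(ν : Measure U) + (K + B) * lpDist μ ν := by
  have hB0 : 0 ≤ B := (norm_nonneg _).trans hB
  have hd0 : 0 ≤ lpDist μ ν := ENNReal.toReal_nonneg
  have key : ∀ r : ℝ, lpDist μ ν < r →
      ∫ x, f x ∂(μ : Measure U) ≤ ∫ x, f x ∂(ν : Measure U) + (K + B) * r := by
    intro r hr
    have hr0 : 0 < r := hd0.trans_lt hr
    have hlt : levyProkhorovEDist (μ : Measure U) (ν : Measure U) < ENNReal.ofReal r := by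
      rw [← ENNReal.ofReal_toReal (levyProkhorovEDist_ne_top (μ : Measure U) (ν : Measure U))]
      exact (ENNReal.ofReal_lt_ofReal_iff hr0).2 hr
    have h1 := BoundedContinuousFunction.integral_le_of_levyProkhorovEDist_lt (μ : Measure U)
      (ν : Measure U) hr0 hlt f (Eventually.of_forall hf)
    set g : U →ᵇ ℝ := f + BoundedContinuousFunction.const U (K * r) with hg
    have hgx : ∀ x, g x = f x + K * r := fun x => rfl
    have hg0 : ∀ x, 0 ≤ g x := fun x => by rw [hgx]; have := hf x; positivity
    have hfg : ‖f‖ ≤ ‖g‖ := by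
      refine (BoundedContinuousFunction.norm_le (norm_nonneg _)).2 fun x => ?_
      have h2 := g.norm_coe_le_norm x
      rw [Real.norm_of_nonneg (hg0 x), hgx] at h2
      rw [Real.norm_of_nonneg (hf x)]
      have : 0 ≤ K * r := by positivity
      linarith
    have h2 := BoundedContinuousFunction.integral_eq_integral_meas_le g (ν : Measure U)
      (Eventually.of_forall hg0)
    have h3 : ∫ x, g x ∂(ν : Measure U) = ∫ x, f x ∂(ν : Measure U) + K * r := by
      simp_rw [hgx]
      rw [integral_add (f.integrable _) (integrable_const _)]
      simp
    have hanti : ∀ s : ℝ → Set U, (∀ t t', t ≤ t' → s t' ⊆ s t) → ∀ b : ℝ,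
        IntegrableOn (fun t => (ν : Measure U).real (s t)) (Set.Ioc 0 b) volume := by
      intro s hs b
      have ha : Antitone fun t => (ν : Measure U).real (s t) :=
        fun t t' h => measureReal_mono (hs t t' h)
      refine Measure.integrableOn_of_bounded (M := 1) (by simp) ha.measurable.aestronglyMeasurable ?_
      refine Eventually.of_forall fun t => ?_
      rw [Real.norm_of_nonneg measureReal_nonneg]
      exact measureReal_le_one
    have h4 : ∫ t in Set.Ioc 0 ‖f‖, (ν : Measure U).real (Metric.thickening r {a | t ≤ f a}) ≤
        ∫ t in Set.Ioc 0 ‖g‖, (ν : Measure U).real {a | t ≤ g a} := by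
      calc _ ≤ ∫ t in Set.Ioc 0 ‖f‖, (ν : Measure U).real {a | t ≤ g a} := by
            refine setIntegral_mono (hanti _ ?_ _) (hanti _ ?_ _) ?_
            · intro t t' h
              exact Metric.thickening_subset_of_subset r fun a (ha : t' ≤ f a) => h.trans ha
            · intro t t' h a (ha : t' ≤ g a)
              exact h.trans ha
            · intro t
              refine measureReal_mono ?_
              intro a ha
              obtain ⟨b, hb, hab⟩ := Metric.mem_thickening_iff.1 ha
              have hb' : t ≤ f b := hb
              change t ≤ g a
              rw [hgx]
              have := hL b a
              rw [dist_comm] at this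
              have : K * dist a b ≤ K * r := by gcongr
              linarith
        _ ≤ _ := by
            refine setIntegral_mono_set (hanti _ ?_ _) ?_ ?_
            · intro t t' h a (ha : t' ≤ g a)
              exact h.trans ha
            · exact Eventually.of_forall fun t => measureReal_nonneg
            · exact (Set.Ioc_subset_Ioc_right hfg).eventuallyLE
    have h5 : r * ‖f‖ ≤ r * B := by gcongr
    nlinarith
  refine le_of_forall_pos_le_add fun ε hε => ?_
  have h := key (lpDist μ ν + ε / (K + B + 1)) (by
    have : 0 < ε / (K + B + 1) := by positivity
    linarith)
  have h2 : (K + B) * (ε / (K + B + 1)) ≤ ε := by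
    rw [mul_div_assoc', div_le_iff₀ (by positivity)]
    nlinarith
  rw [mul_add] at h
  linarith

theorem lp_lip (G : U →ᵇ ℝ) {K M : ℝ} (hK : 0 ≤ K) (hM : ∀ x, |G x| ≤ M)
    (hL : ∀ x y, G x ≤ G y + K * dist x y) (μ ν : ProbabilityMeasure U) :
    |∫ x, G x ∂(μ : Measure U) - ∫ x, G x ∂(ν : Measure U)| ≤ (K + 2 * M) * lpDist μ ν := by
  have hne : Nonempty U := (μ : Measure U).nonempty_of_neZero
  have hM0 : 0 ≤ M := (abs_nonneg _).trans (hM hne.some)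
  have main : ∀ μ ν : ProbabilityMeasure U,
      ∫ x, G x ∂(μ : Measure U) - ∫ x, G x ∂(ν : Measure U) ≤ (K + 2 * M) * lpDist μ ν := by
    intro μ ν
    set f : U →ᵇ ℝ := G + BoundedContinuousFunction.const U M with hf
    have hfx : ∀ x, f x = G x + M := fun x => rfl
    have h0 : ∀ x, 0 ≤ f x := fun x => by
      rw [hfx]; have := (abs_le.1 (hM x)).1; linarith
    have hn : ‖f‖ ≤ 2 * M := by
      refine (BoundedContinuousFunction.norm_le (by positivity)).2 fun x => ?_
      rw [Real.norm_of_nonneg (h0 x), hfx]; have := (abs_le.1 (hM x)).2; linarith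
    have h1 := lp_lip_nonneg f h0 hK hn (fun x y => by
      rw [hfx, hfx]; have := hL x y; linarith) μ ν
    have h3 : ∀ ν : ProbabilityMeasure U,
        ∫ x, f x ∂(ν : Measure U) = ∫ x, G x ∂(ν : Measure U) + M := by
      intro ν
      simp_rw [hfx]
      rw [integral_add (G.integrable _) (integrable_const _)]
      simp
    rw [h3, h3] at h1
    linarith
  have h2 := main ν μ
  have h3 : lpDist ν μ = lpDist μ ν := levyProkhorovDist_comm _ _
  rw [h3] at h2
  exact abs_le.2 ⟨by linarith, main μ ν⟩

theorem aem_lp [SeparableSpace U] (μ : ℝ → ProbabilityMeasure U)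
    (hμ : AEStronglyMeasurable μ volume) (τ : ℝ) :
    AEMeasurable (fun t => lpDist (μ t) (μ (t + τ))) volume := by
  have h1 := (LevyProkhorov.probabilityMeasureHomeomorph (Ω := U)).continuous.comp_aestronglyMeasurable hμ
  have h2 := (LevyProkhorov.probabilityMeasureHomeomorph (Ω := U)).continuous.comp_aestronglyMeasurable
    (aesm_shift hμ τ)
  exact (h1.dist h2).aemeasurable

theorem aesm_int (μ : ℝ → ProbabilityMeasure U)
    (hμ : AEStronglyMeasurable μ volume) (G : U →ᵇ ℝ) :
    AEStronglyMeasurable (fun t => ∫ x, G x ∂(μ t : Measure U)) volume :=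
  (ProbabilityMeasure.continuous_integral_boundedContinuousFunction G).comp_aestronglyMeasurable hμ

theorem memMp_int (μ : ℝ → ProbabilityMeasure U)
    (hμ : AEStronglyMeasurable μ volume) (G : U →ᵇ ℝ) :
    MemMp dist 1 (0 : ℝ) (fun t => ∫ x, G x ∂(μ t : Measure U)) := by
  refine ⟨aesm_int μ hμ G, ‖G‖, fun ξ => ?_⟩
  calc _ ≤ ∫⁻ t in Set.Icc ξ (ξ + 1), ENNReal.ofReal ‖G‖ := by
        refine lintegral_mono fun t => ENNReal.ofReal_le_ofReal ?_
        rw [Real.rpow_one, dist_zero_right]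
        exact G.norm_integral_le_norm _
    _ = _ := by rw [lintegral_const]; simp

theorem exists_phi [SeparableSpace U] [Nonempty U] {ε : ℝ} (hε : 0 < ε) :
    ∃ φ : ℕ → U →ᵇ ℝ, (∀ m x, 0 ≤ φ m x ∧ φ m x ≤ 1) ∧
      (∀ m x y, φ m x ≤ φ m y + 1 / ε * dist x y) ∧
      (∀ x, Tendsto (fun m => φ m x) atTop (𝓝 0)) ∧
      (∀ m, ∃ t : Set U, t.Finite ∧ {x | φ m x ≤ 1 / 2} ⊆ ⋃ y ∈ t, Metric.ball y ε) := by
  set A : ℕ → Set U := fun m => denseSeq U '' Set.Iic m with hA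
  have hAne : ∀ m, (A m).Nonempty := fun m => ⟨_, 0, by simp, rfl⟩
  have hb : ∀ m x, 0 ≤ min 1 (Metric.infDist x (A m) / ε) ∧
      min 1 (Metric.infDist x (A m) / ε) ≤ 1 := fun m x =>
    ⟨le_min zero_le_one (div_nonneg Metric.infDist_nonneg hε.le), min_le_left _ _⟩
  refine ⟨fun m => BoundedContinuousFunction.ofNormedAddCommGroup
    (fun x => min 1 (Metric.infDist x (A m) / ε))
    (continuous_const.min ((Metric.continuous_infDist_pt _).div_const _)) 1 (fun x => by
      rw [Real.norm_of_nonneg (hb m x).1]; exact (hb m x).2), hb, ?_, ?_, ?_⟩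
  · intro m x y
    change min 1 (Metric.infDist x (A m) / ε) ≤ min 1 (Metric.infDist y (A m) / ε) + 1 / ε * dist x y
    have h1 : Metric.infDist x (A m) / ε ≤ Metric.infDist y (A m) / ε + 1 / ε * dist x y := by
      have := Metric.infDist_le_infDist_add_dist (s := A m) (x := x) (y := y)
      calc _ ≤ (Metric.infDist y (A m) + dist x y) / ε := by gcongr
        _ = _ := by ring
    have h2 : 0 ≤ 1 / ε * dist x y := by positivity
    rw [← min_add_add_right]
    exact le_min ((min_le_left _ _).trans (by linarith)) ((min_le_right _ _).trans h1)
  · intro x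
    change Tendsto (fun m => min 1 (Metric.infDist x (A m) / ε)) atTop (𝓝 0)
    rw [Metric.tendsto_atTop]
    intro η hη
    obtain ⟨j, hy⟩ := (denseRange_denseSeq U).exists_mem_open
      (Metric.isOpen_ball (x := x) (ε := η * ε)) ⟨x, Metric.mem_ball_self (by positivity)⟩
    refine ⟨j, fun m hm => ?_⟩
    rw [dist_zero_right, Real.norm_of_nonneg (hb m x).1]
    refine (min_le_right _ _).trans_lt ?_
    rw [div_lt_iff₀ hε]
    have hmem : denseSeq U j ∈ A m := ⟨j, hm, rfl⟩
    refine (Metric.infDist_le_dist_of_mem hmem).trans_lt ?_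
    rw [dist_comm]
    exact hy
  · intro m
    refine ⟨A m, (Set.finite_Iic m).image _, fun x hx => ?_⟩
    have hx' : min 1 (Metric.infDist x (A m) / ε) ≤ 1 / 2 := hx
    have h1 : Metric.infDist x (A m) < ε := by
      by_contra hcon
      push Not at hcon
      have : 1 ≤ Metric.infDist x (A m) / ε := (one_le_div hε).2 hcon
      rw [min_eq_left this] at hx'
      norm_num at hx'
    obtain ⟨y, hy, hxy⟩ := (Metric.infDist_lt_iff (hAne m)).1 h1
    exact Set.mem_biUnion hy hxy

theorem tight [SeparableSpace U] (μ : ℝ → ProbabilityMeasure U) {κ : ProbabilityMeasure U}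
    (H : MemWp lpDist 1 κ μ) {K : ℝ} (hK : 0 ≤ K) (φ : ℕ → U →ᵇ ℝ)
    (h01 : ∀ m x, 0 ≤ φ m x ∧ φ m x ≤ 1) (hL : ∀ m x y, φ m x ≤ φ m y + K * dist x y)
    (hT : ∀ x, Tendsto (fun m => φ m x) atTop (𝓝 0)) {δ : ℝ} (hδ : 0 < δ) :
    ∃ m, ∃ l > 0, Avg (fun t => ∫ x, φ m x ∂(μ t : Measure U)) l δ := by
  set C := K + 2 * 1 with hC
  have hC0 : 0 < C := by positivity
  obtain ⟨l, hl, a, ha, hper⟩ := H.2 (δ / (2 * C)) (by positivity)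
  have hi01 : ∀ m (ν : ProbabilityMeasure U), 0 ≤ ∫ x, φ m x ∂(ν : Measure U) ∧
      ∫ x, φ m x ∂(ν : Measure U) ≤ 1 := by
    intro m ν
    refine ⟨integral_nonneg fun x => (h01 m x).1, ?_⟩
    calc _ ≤ ∫ x, (1 : ℝ) ∂(ν : Measure U) :=
          integral_mono ((φ m).integrable _) (integrable_const _) fun x => (h01 m x).2
      _ = 1 := by simp
  have hin : ∀ ν : ProbabilityMeasure U,
      Tendsto (fun m => ∫ x, φ m x ∂(ν : Measure U)) atTop (𝓝 0) := by
    intro ν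
    have := tendsto_integral_of_dominated_convergence (μ := (ν : Measure U))
      (F := fun m x => φ m x) (f := fun _ => (0 : ℝ)) (fun _ => (1 : ℝ))
      (fun m => (φ m).continuous.aestronglyMeasurable) (integrable_const _)
      (fun m => Eventually.of_forall fun x => by
        rw [Real.norm_of_nonneg (h01 m x).1]; exact (h01 m x).2)
      (Eventually.of_forall hT)
    simpa using this
  have hout : Tendsto (fun m => ∫⁻ t in Set.Icc 0 (l + a),
      ENNReal.ofReal (∫ x, φ m x ∂(μ t : Measure U))) atTop (𝓝 0) := by
    have := tendsto_lintegral_of_dominated_convergence' (μ := volume.restrict (Set.Icc 0 (l + a)))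
      (F := fun m t => ENNReal.ofReal (∫ x, φ m x ∂(μ t : Measure U))) (f := fun _ => 0)
      (fun _ => 1)
      (fun m => ((aesm_int μ H.1.1 (φ m)).aemeasurable.ennreal_ofReal).restrict)
      (fun m => Eventually.of_forall fun t => by
        simpa using ENNReal.ofReal_le_ofReal (hi01 m (μ t)).2)
      (by simp)
      (Eventually.of_forall fun t => by
        simpa [Function.comp_def] using (ENNReal.continuous_ofReal.tendsto 0).comp (hin (μ t)))
    simpa using this
  have hpos : (0 : ℝ≥0∞) < ENNReal.ofReal (δ / 2 * l) := ENNReal.ofReal_pos.2 (by positivity)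
  obtain ⟨m, hm⟩ := (hout.eventually_lt_const hpos).exists
  refine ⟨m, l, hl, fun ξ => ?_⟩
  obtain ⟨τ, hτ, hτp⟩ := hper (-ξ)
  have hA := (avg_of_weylD hl hτp).const_mul hC0.le ξ
  have e1 : C * (δ / (2 * C)) * l = δ / 2 * l := by field_simp
  rw [e1] at hA
  have hsh : AEMeasurable (fun t => ENNReal.ofReal (∫ x, φ m x ∂(μ (t + τ) : Measure U)))
      (volume.restrict (Set.Icc ξ (ξ + l))) :=
    ((aesm_shift (aesm_int μ H.1.1 (φ m)) τ).aemeasurable.ennreal_ofReal).restrict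
  calc _ ≤ ∫⁻ t in Set.Icc ξ (ξ + l), (ENNReal.ofReal (∫ x, φ m x ∂(μ (t + τ) : Measure U)) +
        ENNReal.ofReal (C * lpDist (μ t) (μ (t + τ)))) := by
        refine lintegral_mono fun t => ?_
        refine (ENNReal.ofReal_le_ofReal ?_).trans ENNReal.ofReal_add_le
        have := lp_lip (φ m) hK (M := 1) (fun x => by
          rw [abs_of_nonneg (h01 m x).1]; exact (h01 m x).2) (hL m) (μ t) (μ (t + τ))
        have := (abs_le.1 this).2
        linarith
    _ = (∫⁻ t in Set.Icc ξ (ξ + l), ENNReal.ofReal (∫ x, φ m x ∂(μ (t + τ) : Measure U))) +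
        ∫⁻ t in Set.Icc ξ (ξ + l), ENNReal.ofReal (C * lpDist (μ t) (μ (t + τ))) :=
        lintegral_add_left' hsh _
    _ ≤ ENNReal.ofReal (δ / 2 * l) + ENNReal.ofReal (δ / 2 * l) := by
        refine add_le_add ?_ hA
        rw [lintegral_shift (fun t => ENNReal.ofReal (∫ x, φ m x ∂(μ t : Measure U)))]
        refine (lintegral_mono_set ?_).trans hm.le
        exact Set.Icc_subset_Icc (by linarith [hτ.1]) (by linarith [hτ.2])
    _ = _ := by
        rw [← ENNReal.ofReal_add (by positivity) (by positivity)]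
        congr 1; ring

theorem exists_reg (F : U →ᵇ ℝ) :
    ∃ G : ℕ → U →ᵇ ℝ, (∀ n x, |G n x| ≤ ‖F‖) ∧
      (∀ n x y, G n x ≤ G n y + n * dist x y) ∧ (∀ n x, G n x ≤ F x) ∧
      (∀ x, Monotone fun n => G n x) ∧ ∀ x, ∀ δ > 0, ∃ n, F x - δ ≤ G n x := by
  rcases isEmpty_or_nonempty U with hU | hU
  · exact ⟨fun _ => 0, fun n x => hU.elim x, fun n x => hU.elim x, fun n x => hU.elim x,
      fun x => hU.elim x, fun x => hU.elim x⟩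
  have hFb : ∀ y, -‖F‖ ≤ F y ∧ F y ≤ ‖F‖ := fun y => abs_le.1 (F.norm_coe_le_norm y)
  set g : ℕ → U → ℝ := fun n x => ⨅ y, F y + n * dist x y with hg
  have hlow : ∀ (n : ℕ) x y, -‖F‖ ≤ F y + n * dist x y := fun n x y => by
    have := (hFb y).1
    have : 0 ≤ (n : ℝ) * dist x y := by positivity
    linarith
  have hbdd : ∀ (n : ℕ) x, BddBelow (Set.range fun y => F y + n * dist x y) := fun n x =>
    ⟨-‖F‖, by rintro _ ⟨y, rfl⟩; exact hlow n x y⟩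
  have hle : ∀ (n : ℕ) x y, g n x ≤ F y + n * dist x y := fun n x y => ciInf_le (hbdd n x) y
  have hleF : ∀ n x, g n x ≤ F x := fun n x => by simpa using hle n x x
  have habs : ∀ n x, |g n x| ≤ ‖F‖ := fun n x =>
    abs_le.2 ⟨le_ciInf fun y => hlow n x y, (hleF n x).trans (hFb x).2⟩
  have hlip : ∀ (n : ℕ) x y, g n x ≤ g n y + n * dist x y := by
    intro n x y
    rw [← sub_le_iff_le_add]
    refine le_ciInf fun z => ?_
    have h1 := hle n x z
    have h2 := mul_le_mul_of_nonneg_left (dist_triangle x y z) (Nat.cast_nonneg (α := ℝ) n)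
    linarith
  have hcont : ∀ n, Continuous (g n) := by
    intro n
    refine (LipschitzWith.of_le_add_mul (n : NNReal) fun x y => ?_).continuous
    simpa using hlip n x y
  refine ⟨fun n => BoundedContinuousFunction.ofNormedAddCommGroup (g n) (hcont n) ‖F‖ (habs n),
    habs, hlip, hleF, ?_, ?_⟩
  · intro x n n' hn
    change g n x ≤ g n' x
    refine le_ciInf fun y => (hle n x y).trans ?_
    gcongr
  · intro x δ hδ
    change ∃ n, F x - δ ≤ g n x
    obtain ⟨r, hr, hball⟩ := Metric.continuousAt_iff.1 F.continuous.continuousAt δ hδ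
    obtain ⟨n, hn⟩ := exists_nat_ge (2 * ‖F‖ / r)
    refine ⟨n, le_ciInf fun y => ?_⟩
    rcases lt_or_ge (dist y x) r with h | h
    · have h1 := hball h
      rw [Real.dist_eq, abs_lt] at h1
      have : 0 ≤ (n : ℝ) * dist x y := by positivity
      linarith [h1.1]
    · rw [div_le_iff₀ hr] at hn
      rw [dist_comm] at h
      have : (n : ℝ) * r ≤ n * dist x y := by gcongr
      linarith [(hFb x).2, (hFb y).1]

theorem good_set [CompleteSpace U] (F : U →ᵇ ℝ) (G : ℕ → U →ᵇ ℝ)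
    (hmono : ∀ x, Monotone fun n => G n x) (hlim : ∀ x, ∀ δ > 0, ∃ n, F x - δ ≤ G n x)
    (φ : ℕ → U →ᵇ ℝ)
    (hφ : ∀ j, ∃ t : Set U, t.Finite ∧
      {x | φ j x ≤ 1 / 2} ⊆ ⋃ y ∈ t, Metric.ball y (1 / ((j : ℝ) + 1)))
    {δ : ℝ} (hδ : 0 < δ) :
    ∃ n, ∀ x, (∀ j ≤ n, φ j x ≤ 1 / 2) → F x - G n x < δ := by
  by_contra hcon
  push Not at hcon
  choose x hx hxδ using hcon
  set 𝒰 : Ultrafilter U := (hyperfilter ℕ).map x with hU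
  have hcof : ∀ N : ℕ, ∀ᶠ n in (hyperfilter ℕ : Filter ℕ), N ≤ n := fun N => by
    refine (hyperfilter_le_cofinite (α := ℕ)) ?_
    rw [Nat.cofinite_eq_atTop]
    exact eventually_ge_atTop N
  have hmem : ∀ j, {x | φ j x ≤ 1 / 2} ∈ (𝒰 : Filter U) := fun j => by
    change ∀ᶠ n in (hyperfilter ℕ : Filter ℕ), φ j (x n) ≤ 1 / 2
    filter_upwards [hcof j] with n hn using hx n j hn
  have hcau : Cauchy (𝒰 : Filter U) := by
    refine Metric.cauchy_iff.2 ⟨inferInstance, fun ε hε => ?_⟩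
    obtain ⟨j, hj⟩ := exists_nat_one_div_lt (half_pos hε)
    obtain ⟨t, htf, ht⟩ := hφ j
    have h1 := mem_of_superset (hmem j) ht
    obtain ⟨y, hy, hyb⟩ := (Ultrafilter.finite_biUnion_mem_iff htf).1 h1
    refine ⟨_, hyb, fun a ha b hb => ?_⟩
    rw [Metric.mem_ball] at ha hb
    have := dist_triangle_right a b y
    linarith
  obtain ⟨z, hz⟩ := CompleteSpace.complete hcau
  obtain ⟨N, hN⟩ := hlim z (δ / 2) (half_pos hδ)
  have hopen : IsOpen {y | F y - G N y < δ} :=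
    isOpen_lt (F.continuous.sub (G N).continuous) continuous_const
  have hev : {y | F y - G N y < δ} ∈ (𝒰 : Filter U) :=
    hz (hopen.mem_nhds (by change F z - G N z < δ; linarith))
  have hev' : ∀ᶠ n in (hyperfilter ℕ : Filter ℕ), F (x n) - G N (x n) < δ := hev
  obtain ⟨n, hn1, hn2⟩ := (hev'.and (hcof N)).exists
  have h1 := hmono (x n) hn2
  have h2 := hxδ n
  simp only at h1
  linarith

theorem forward [CompleteSpace U] [SeparableSpace U] (μ : ℝ → ProbabilityMeasure U)
    {κ : ProbabilityMeasure U} (H : MemWp lpDist 1 κ μ) (F : U →ᵇ ℝ) :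
    MemWp dist 1 (0 : ℝ) (fun t => ∫ x, F x ∂(μ t : Measure U)) := by
  refine ⟨memMp_int μ H.1.1 F, fun ε hε => ?_⟩
  have hne : Nonempty U := (κ : Measure U).nonempty_of_neZero
  obtain ⟨G, hGabs, hGlip, hGle, hGmono, hGlim⟩ := exists_reg F
  set M := ‖F‖ with hM
  have hM0 : 0 ≤ M := norm_nonneg _
  have hFx : ∀ x, F x ≤ M := fun x => (abs_le.1 (F.norm_coe_le_norm x)).2
  set η := ε / (64 * (M + 1)) with hη
  have hη0 : 0 < η := by positivity
  have step : ∀ j : ℕ, ∃ φ : U →ᵇ ℝ, ∃ l > 0, (∀ x, 0 ≤ φ x) ∧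
      Avg (fun t => ∫ x, φ x ∂(μ t : Measure U)) l (η / 2 * (1 / 2) ^ j) ∧
      ∃ t : Set U, t.Finite ∧ {x | φ x ≤ 1 / 2} ⊆ ⋃ y ∈ t, Metric.ball y (1 / ((j : ℝ) + 1)) := by
    intro j
    obtain ⟨φ, h1, h2, h3, h4⟩ := exists_phi (U := U) (ε := 1 / ((j : ℝ) + 1)) (by positivity)
    obtain ⟨m, l, hl, hA⟩ := tight μ H (K := 1 / (1 / ((j : ℝ) + 1))) (by positivity) φ h1 h2 h3
      (δ := η / 2 * (1 / 2) ^ j) (by positivity)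
    exact ⟨φ m, l, hl, fun x => (h1 m x).1, hA, h4 m⟩
  choose φ l hl hφ0 hφA hφt using step
  obtain ⟨n, hn⟩ := good_set F G hGmono hGlim φ hφt (δ := ε / 8) (by positivity)
  set u : ℝ → ℝ := fun t => ∫ x, F x ∂(μ t : Measure U) - ∫ x, G n x ∂(μ t : Measure U) with hu
  have hpt : ∀ x, F x - G n x ≤ ε / 8 + 4 * M * ∑ j ∈ Finset.range (n + 1), φ j x := by
    intro x
    have hs : 0 ≤ ∑ j ∈ Finset.range (n + 1), φ j x := Finset.sum_nonneg fun j _ => hφ0 j x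
    by_cases hx : ∀ j ≤ n, φ j x ≤ 1 / 2
    · have := hn x hx
      have : 0 ≤ 4 * M * ∑ j ∈ Finset.range (n + 1), φ j x := by positivity
      linarith
    · push Not at hx
      obtain ⟨j, hj, hjx⟩ := hx
      have h1 : φ j x ≤ ∑ j ∈ Finset.range (n + 1), φ j x :=
        Finset.single_le_sum (f := fun j => φ j x) (fun j _ => hφ0 j x)
          (Finset.mem_range.2 (by omega))
      have h2 : 1 / 2 ≤ ∑ j ∈ Finset.range (n + 1), φ j x := hjx.le.trans h1
      have h3 := (abs_le.1 (hGabs n x)).1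
      have h4 := hFx x
      nlinarith
  have hu_le : ∀ t, u t ≤ ε / 8 + 4 * M * ∑ j ∈ Finset.range (n + 1),
      ∫ x, φ j x ∂(μ t : Measure U) := by
    intro t
    have hInt0 : Integrable (fun x => ∑ j ∈ Finset.range (n + 1), φ j x) (μ t : Measure U) :=
      integrable_finsetSum _ fun j _ => (φ j).integrable _
    calc u t = ∫ x, (F x - G n x) ∂(μ t : Measure U) :=
          (integral_sub (F.integrable _) ((G n).integrable _)).symm
      _ ≤ ∫ x, (ε / 8 + 4 * M * ∑ j ∈ Finset.range (n + 1), φ j x) ∂(μ t : Measure U) :=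
          integral_mono ((F.integrable _).sub ((G n).integrable _))
            ((integrable_const _).add (hInt0.const_mul _)) hpt
      _ = _ := by
          rw [integral_add (integrable_const _) (hInt0.const_mul _), integral_const_mul,
            integral_finsetSum _ fun j _ => (φ j).integrable _]
          simp
  have hu0 : ∀ t, 0 ≤ u t := fun t =>
    sub_nonneg.2 (integral_mono ((G n).integrable _) (F.integrable _) (hGle n))
  have hum : AEStronglyMeasurable u volume := (aesm_int μ H.1.1 F).sub (aesm_int μ H.1.1 (G n))
  set C : ℝ := n + 2 * M with hC
  have hC0 : 0 ≤ C := by positivity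
  obtain ⟨l', hl', a, ha, hper⟩ := H.2 (ε / (8 * (C + 1))) (by positivity)
  set L := l' + ∑ j ∈ Finset.range (n + 1), l j with hLdef
  have hLl' : l' ≤ L := le_add_of_nonneg_right (Finset.sum_nonneg fun j _ => (hl j).le)
  have hL : 0 < L := hl'.trans_le hLl'
  have hLj : ∀ j < n + 1, l j ≤ L := fun j hj => by
    have := Finset.single_le_sum (f := l) (fun j _ => (hl j).le) (Finset.mem_range.2 hj)
    linarith
  have hsumA : Avg (fun t => ∑ j ∈ Finset.range (n + 1), ∫ x, φ j x ∂(μ t : Measure U)) L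
      (∑ j ∈ Finset.range (n + 1), 2 * (η / 2 * (1 / 2) ^ j)) :=
    Avg.sum hL (fun j _ => by positivity) (fun j _ => (aesm_int μ H.1.1 (φ j)).aemeasurable)
      (fun j hj => (hφA j).scale (hl j) (by positivity) (hLj j hj))
  have hsum : ∑ j ∈ Finset.range (n + 1), 2 * (η / 2 * (1 / 2) ^ j) ≤ 2 * η := by
    have h1 := sum_geometric_two_le (n + 1)
    calc _ = η * ∑ j ∈ Finset.range (n + 1), (1 / 2 : ℝ) ^ j := by
          rw [Finset.mul_sum]; exact Finset.sum_congr rfl fun j _ => by ring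
      _ ≤ η * 2 := by gcongr
      _ = _ := by ring
  have hM4 : 4 * M * (2 * η) ≤ ε / 8 := by
    rw [hη, show 4 * M * (2 * (ε / (64 * (M + 1)))) = (M * ε) / (8 * (M + 1)) by field_simp; ring,
      div_le_div_iff₀ (by positivity) (by positivity)]
    nlinarith
  have huA : Avg u L (ε / 8 + ε / 8) := by
    refine Avg.mono ?_ hu_le
    refine Avg.add hL (by positivity) (by positivity) aemeasurable_const
      (Avg.const (by positivity)) ?_
    exact (((hsumA.mono_c hL hsum).const_mul (by positivity))).mono_c hL hM4
  refine ⟨L, hL, a, ha, fun ξ => ?_⟩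
  obtain ⟨τ, hτ, hτp⟩ := hper ξ
  refine ⟨τ, hτ, ?_⟩
  have hlp := (((avg_of_weylD hl' hτp).scale hl' (by positivity) hLl').const_mul hC0).mono_c
    (c' := ε / 4) hL (by
      rw [show C * (2 * (ε / (8 * (C + 1)))) = (C * ε) / (4 * (C + 1)) by field_simp; ring,
        div_le_div_iff₀ (by positivity) (by positivity)]
      nlinarith)
  have hall : Avg (fun t => dist (∫ x, F x ∂(μ t : Measure U)) (∫ x, F x ∂(μ (t + τ) : Measure U)))
      L ((ε / 8 + ε / 8) + ((ε / 8 + ε / 8) + ε / 4)) := by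
    refine Avg.mono (Avg.add hL (by positivity) (by positivity) hum.aemeasurable huA
      (Avg.add hL (by positivity) (by positivity) (aesm_shift hum τ).aemeasurable
        (huA.shift τ) hlp)) fun t => ?_
    have h1 := lp_lip (G n) (Nat.cast_nonneg n) (hGabs n) (hGlip n) (μ t) (μ (t + τ))
    have h2 := abs_le.1 h1
    have h3 := hu0 t
    have h4 := hu0 (t + τ)
    simp only [hu] at h3 h4 ⊢
    rw [Real.dist_eq, abs_le]
    constructor <;> linarith [h2.1, h2.2]
  exact weylD_lt hL hε (by linarith) hall
end

end WeylAP


/-- **Characterization of Weyl a.p. measure-valued functions.**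
Let `(U,ρ)` be a complete separable metric space.  A measure-valued function
`ℝ ∋ t ↦ μ[·;t] ∈ 𝓜(U)` belongs to `W₁(ℝ, 𝓜(U))` (w.r.t. the Lévy–Prokhorov metric)
iff `t ↦ ∫_U 𝓕(x) μ[dx;t]` belongs to `W₁(ℝ,ℝ)` for every `𝓕 ∈ C_b(U,ℝ)`. -/
theorem weyl_ap_measure_iff {U : Type*} [MetricSpace U] [CompleteSpace U]
    [TopologicalSpace.SeparableSpace U] [MeasurableSpace U] [BorelSpace U] (x₀ : U)
    (μ : ℝ → ProbabilityMeasure U) :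
    MemWp lpDist 1
      (⟨MeasureTheory.Measure.dirac x₀, inferInstance⟩ : ProbabilityMeasure U) μ ↔
    ∀ 𝓕 : BoundedContinuousFunction U ℝ,
      MemWp dist 1 (0 : ℝ) (fun t => ∫ x, 𝓕 x ∂(μ t : Measure U)) := by
  exact ⟨fun H 𝓕 => WeylAP.forward μ H 𝓕, fun H => WeylAP.backward x₀ μ _ H⟩
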